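/- arXiv:1706.04079 — 4 statements merged into one kernel-verified Lean document; each statement's English description precedes it below -/
import Mathlib

section
/- Let μ be a finite positive Borel measure on [0,1) and let 0<s₁,s₂<∞. The following conditions are equivalent: (i) the operator I_μ is well defined on Q_{s₁} and bounded from Q_{s₁} into Q_{s₂}; (ii) the operator H_μ is well defined on Q_{s₁} and bounded from Q_{s₁} into Q_{s₂}; (iii) μ is a 1-logarithmic 1-Carleson measure. -/
open MeasureTheory Set Metric ENNReal

noncomputable section

namespace PaperHankel

/-- The moment of order `n` of a measure on `[0,1)`:  `μ_n = ∫_{[0,1)} t^n dμ(t)`. -/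
def mom (μ : Measure ℝ) (n : ℕ) : ℝ := ∫ t in Ico (0:ℝ) 1, t ^ n ∂μ

/-- The `n`-th Taylor coefficient of `f` at `0`. -/
def tc (f : ℂ → ℂ) (n : ℕ) : ℂ := iteratedDeriv n f 0 / n.factorial

/-- The `n`-th Taylor coefficient of `H_μ f`, namely `∑_k μ_{n+k} a_k`. -/
def hmuCoeff (μ : Measure ℝ) (f : ℂ → ℂ) (n : ℕ) : ℂ :=
  ∑' k : ℕ, (mom μ (n + k) : ℂ) * tc f k

/-- `H_μ f` is well defined: each coefficient series converges absolutely, and the resulting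
power series has radius of convergence at least `1`. -/
def HmuWD (μ : Measure ℝ) (f : ℂ → ℂ) : Prop :=
  (∀ n : ℕ, Summable fun k : ℕ => ‖(mom μ (n + k) : ℂ) * tc f k‖) ∧
  ∀ z ∈ ball (0:ℂ) 1, Summable fun n : ℕ => ‖hmuCoeff μ f n * z ^ n‖

/-- The generalized Hilbert operator induced by the Hankel matrix of moments of `μ`. -/
def Hmu (μ : Measure ℝ) (f : ℂ → ℂ) : ℂ → ℂ :=
  fun z => ∑' n : ℕ, hmuCoeff μ f n * z ^ n

/-- `I_μ f` is well defined: the defining integral converges absolutely for every `z ∈ 𝔻`. -/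
def ImuWD (μ : Measure ℝ) (f : ℂ → ℂ) : Prop :=
  ∀ z ∈ ball (0:ℂ) 1, IntegrableOn (fun t : ℝ => f t / (1 - t * z)) (Ico (0:ℝ) 1) μ

/-- The integral operator `I_μ f (z) = ∫_{[0,1)} f(t)/(1-tz) dμ(t)`. -/
def Imu (μ : Measure ℝ) (f : ℂ → ℂ) : ℂ → ℂ :=
  fun z => ∫ t in Ico (0:ℝ) 1, f t / (1 - t * z) ∂μ

/-- The `p`-th circle mean `M_p(r,f)` raised into the Hardy norm shape:
`((1/2π) ∫_0^{2π} |f(r e^{iθ})|^p dθ)^{1/p}`. -/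
def circMean (p : ℝ) (f : ℂ → ℂ) (r : ℝ) : ℝ :=
  ((2 * Real.pi)⁻¹ * ∫ θ in (0:ℝ)..(2 * Real.pi),
      ‖f (r * Complex.exp (θ * Complex.I))‖ ^ p) ^ (1 / p)

/-- Membership in the Hardy space `H^p`. -/
def MemHardy (p : ℝ) (f : ℂ → ℂ) : Prop :=
  DifferentiableOn ℂ f (ball (0:ℂ) 1) ∧ ∃ M : ℝ, ∀ r ∈ Ico (0:ℝ) 1, circMean p f r ≤ M

/-- The `H^p` norm. -/
def hardyNorm (p : ℝ) (f : ℂ → ℂ) : ℝ :=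
  sSup {x : ℝ | ∃ r ∈ Ico (0:ℝ) 1, x = circMean p f r}

/-- Membership in `H^∞`: analytic and bounded on the unit disc. -/
def MemHinf (f : ℂ → ℂ) : Prop :=
  DifferentiableOn ℂ f (ball (0:ℂ) 1) ∧ ∃ M : ℝ, ∀ z ∈ ball (0:ℂ) 1, ‖f z‖ ≤ M

/-- The `H^∞` norm. -/
def hinfNorm (f : ℂ → ℂ) : ℝ := sSup {x : ℝ | ∃ z ∈ ball (0:ℂ) 1, x = ‖f z‖}

/-- The mean `M_2(r,g) = ((1/2π) ∫_0^{2π} |g(r e^{iθ})|² dθ)^{1/2}`. -/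
def M2 (g : ℂ → ℂ) (r : ℝ) : ℝ :=
  Real.sqrt ((2 * Real.pi)⁻¹ * ∫ θ in (0:ℝ)..(2 * Real.pi),
      ‖g (r * Complex.exp (θ * Complex.I))‖ ^ 2)

/-- Membership in the mean Lipschitz space `Λ²_{1/2}`:
`M_2(r,f') = O((1-r)^{-1/2})` as `r → 1⁻`. -/
def MemLambda (f : ℂ → ℂ) : Prop :=
  DifferentiableOn ℂ f (ball (0:ℂ) 1) ∧
  ∃ C : ℝ, ∀ r ∈ Ico (0:ℝ) 1, Real.sqrt (1 - r) * M2 (deriv f) r ≤ C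

/-- The norm on `Λ²_{1/2}`. -/
def lambdaNorm (f : ℂ → ℂ) : ℝ :=
  ‖f 0‖ + sSup {x : ℝ | ∃ r ∈ Ico (0:ℝ) 1, x = Real.sqrt (1 - r) * M2 (deriv f) r}

/-- `∫_𝔻 |f'(z)|² g(z,a)^s dA(z)` with `g(z,a) = log |(1- ā z)/(z-a)|` and `dA` the
normalized area measure, computed as a lower integral in `[0,∞]`. -/
def qsInt (s : ℝ) (f : ℂ → ℂ) (a : ℂ) : ℝ≥0∞ :=
  (ENNReal.ofReal Real.pi)⁻¹ * ∫⁻ z in ball (0:ℂ) 1,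
    ENNReal.ofReal (‖deriv f z‖ ^ 2 * (Real.log ‖(1 - (starRingEnd ℂ) a * z) / (z - a)‖) ^ s)

/-- Membership in `Q_s`: analytic on `𝔻` with `ρ_{Q_s}(f)² = sup_{a ∈ 𝔻} ∫ ... < ∞`. -/
def MemQs (s : ℝ) (f : ℂ → ℂ) : Prop :=
  DifferentiableOn ℂ f (ball (0:ℂ) 1) ∧ (⨆ a ∈ ball (0:ℂ) 1, qsInt s f a) < ⊤

/-- The norm on `Q_s`, `‖f‖ = |f(0)| + ρ_{Q_s}(f)`. -/
def qsNorm (s : ℝ) (f : ℂ → ℂ) : ℝ :=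
  ‖f 0‖ + Real.sqrt (⨆ a ∈ ball (0:ℂ) 1, qsInt s f a).toReal

/-- The condition `∫_{[0,1)} tⁿ log(1/(1-t)) dμ(t) = O(1/n)`, stated with the lower
integral so that in particular the integrals are finite. -/
def LogMomentBigO (μ : Measure ℝ) : Prop :=
  ∃ C > 0, ∀ n : ℕ, 1 ≤ n →
    (∫⁻ t in Ico (0:ℝ) 1, ENNReal.ofReal (t ^ n * Real.log (1 / (1 - t))) ∂μ) ≤
      ENNReal.ofReal (C / n)

/-- Membership in the Bloch space. -/
def MemBloch (f : ℂ → ℂ) : Prop :=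
  DifferentiableOn ℂ f (ball (0:ℂ) 1) ∧
  ∃ M : ℝ, ∀ z ∈ ball (0:ℂ) 1, (1 - ‖z‖ ^ 2) * ‖deriv f z‖ ≤ M

/-- The Bloch norm `‖f‖ = |f(0)| + ρ_B(f)`. -/
def blochNorm (f : ℂ → ℂ) : ℝ :=
  ‖f 0‖ + sSup {x : ℝ | ∃ z ∈ ball (0:ℂ) 1, x = (1 - ‖z‖ ^ 2) * ‖deriv f z‖}

/-- Membership in the Besov space `B^p`. -/
def MemBesov (p : ℝ) (f : ℂ → ℂ) : Prop :=
  DifferentiableOn ℂ f (ball (0:ℂ) 1) ∧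
  IntegrableOn (fun z : ℂ => (1 - ‖z‖ ^ 2) ^ (p - 2) * ‖deriv f z‖ ^ p) (ball (0:ℂ) 1) volume

/-- The Besov norm `‖f‖ = |f(0)| + ρ_p(f)`. -/
def besovNorm (p : ℝ) (f : ℂ → ℂ) : ℝ :=
  ‖f 0‖ + (Real.pi⁻¹ *
    ∫ z in ball (0:ℂ) 1, (1 - ‖z‖ ^ 2) ^ (p - 2) * ‖deriv f z‖ ^ p) ^ (1 / p)

/-- `μ` is an `α`-logarithmic `s`-Carleson measure on `[0,1)`. -/
def IsLogCarleson (μ : Measure ℝ) (α s : ℝ) : Prop :=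
  ∃ C > 0, ∀ t ∈ Ico (0:ℝ) 1,
    (μ (Ico t 1)).toReal * Real.log (2 / (1 - t)) ^ α ≤ C * (1 - t) ^ s

/-- `μ` is an `s`-Carleson measure on `[0,1)`. -/
def IsCarleson (μ : Measure ℝ) (s : ℝ) : Prop :=
  ∃ C > 0, ∀ t ∈ Ico (0:ℝ) 1, (μ (Ico t 1)).toReal ≤ C * (1 - t) ^ s


lemma polar_ball (G : ℂ → ℝ≥0∞) (hG : Measurable G) (R : ℝ) :
    ∫⁻ z in ball (0:ℂ) R, G z = ∫⁻ r in Ioo (0:ℝ) R, ENNReal.ofReal r *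
      ∫⁻ θ in Ioo (-Real.pi) Real.pi, G (circleMap 0 r θ) := by
  have hmeas : Measurable fun p : ℝ × ℝ => G (circleMap 0 p.1 p.2) := by
    apply hG.comp
    unfold circleMap
    fun_prop
  rw [← lintegral_indicator measurableSet_ball, ← Complex.lintegral_comp_polarCoord_symm]
  have h1 : ∀ p ∈ polarCoord.target, ENNReal.ofReal p.1 • (ball (0:ℂ) R).indicator G
      (Complex.polarCoord.symm p) = (Ioo (0:ℝ) R ×ˢ (univ : Set ℝ)).indicator
        (fun p : ℝ × ℝ => ENNReal.ofReal p.1 * G (circleMap 0 p.1 p.2)) p := by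
    intro p hp
    have hp1 : 0 < p.1 := hp.1
    have e : Complex.polarCoord.symm p = circleMap 0 p.1 p.2 := by
      rw [Complex.polarCoord_symm_apply, circleMap, Complex.exp_mul_I]; simp
    by_cases h : p.1 < R
    · rw [indicator_of_mem, indicator_of_mem, e]; · rfl
      · exact ⟨⟨hp1, h⟩, mem_univ _⟩
      · rw [mem_ball_zero_iff, Complex.norm_polarCoord_symm, abs_of_pos hp1]; exact h
    · rw [indicator_of_notMem, indicator_of_notMem, smul_zero]
      · intro h'; exact h h'.1.2
      · rw [mem_ball_zero_iff, Complex.norm_polarCoord_symm, abs_of_pos hp1]; exact h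
  rw [setLIntegral_congr_fun polarCoord.open_target.measurableSet h1,
    setLIntegral_indicator (measurableSet_Ioo.prod MeasurableSet.univ)]
  have h2 : (Ioo (0:ℝ) R ×ˢ (univ : Set ℝ)) ∩ polarCoord.target =
      Ioo (0:ℝ) R ×ˢ Ioo (-Real.pi) Real.pi := by
    ext p
    simp only [polarCoord_target, mem_inter_iff, mem_prod, mem_univ, mem_Ioi, mem_Ioo]
    tauto
  rw [h2, Measure.volume_eq_prod, setLIntegral_prod]
  · refine lintegral_congr fun r => ?_
    simp only
    rw [lintegral_const_mul]
    exact hmeas.comp measurable_prodMk_left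
  · exact (by fun_prop : Measurable fun p : ℝ × ℝ => ENNReal.ofReal p.1 * G (circleMap 0 p.1 p.2)).aemeasurable

lemma submean_circle (h : ℂ → ℂ) (r : ℝ) (hr : 0 < r) (hd : DifferentiableOn ℂ h (closedBall 0 r)) :
    ENNReal.ofReal (2 * Real.pi * ‖h 0‖) ≤
      ∫⁻ θ in Ioo (-Real.pi) Real.pi, ENNReal.ofReal ‖h (circleMap 0 r θ)‖ := by
  have hm : Real.circleAverage h 0 r = h 0 := by
    apply DiffContOnCl.circleAverage
    rw [abs_of_pos hr]
    exact hd.diffContOnCl_ball subset_rfl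
  have hc : Continuous fun θ => h (circleMap 0 r θ) :=
    hd.continuousOn.comp_continuous (continuous_circleMap 0 r)
      (fun θ => by simp [abs_of_pos hr])
  have hper : Function.Periodic (fun θ => h (circleMap 0 r θ)) (2 * Real.pi) := by
    intro θ; simp only; rw [periodic_circleMap 0 r θ]
  have h3 : ∫ θ in (0:ℝ)..(2 * Real.pi), h (circleMap 0 r θ)
      = ∫ θ in (-Real.pi)..Real.pi, h (circleMap 0 r θ) := by
    have := hper.intervalIntegral_add_eq 0 (-Real.pi)
    rw [zero_add] at this
    rw [this]; congr 1; ring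
  have hpi := Real.pi_pos
  have h4 : (2 * Real.pi * ‖h 0‖) ≤ ∫ θ in Ioo (-Real.pi) Real.pi, ‖h (circleMap 0 r θ)‖ := by
    rw [← hm, Real.circleAverage_def, norm_smul, h3, intervalIntegral.integral_of_le (by linarith),
      integral_Ioc_eq_integral_Ioo, norm_inv, Real.norm_of_nonneg (by positivity : 0 ≤ 2 * Real.pi),
      ← mul_assoc, mul_inv_cancel₀ (by positivity), one_mul]
    exact norm_integral_le_integral_norm _
  refine (ENNReal.ofReal_le_ofReal h4).trans ?_
  rw [ofReal_integral_eq_lintegral_ofReal]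
  · exact (hc.norm.integrableOn_Icc).mono_set Ioo_subset_Icc_self
  · exact ae_of_all _ fun _ => norm_nonneg _

lemma lint_r (R : ℝ) (hR : 0 < R) : ∫⁻ r in Ioo (0:ℝ) R, ENNReal.ofReal r = ENNReal.ofReal (R ^ 2 / 2) := by
  rw [← ofReal_integral_eq_lintegral_ofReal]
  · rw [← integral_Ioc_eq_integral_Ioo, ← intervalIntegral.integral_of_le hR.le, integral_id]; simp
  · exact (continuous_id.integrableOn_Icc).mono_set Ioo_subset_Icc_self
  · filter_upwards [ae_restrict_mem measurableSet_Ioo] with x hx using hx.1.le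

lemma submean_ball0 (h : ℂ → ℂ) (hmeas : Measurable h) (R : ℝ) (hR : 0 < R)
    (hd : DifferentiableOn ℂ h (ball 0 R)) :
    ENNReal.ofReal (Real.pi * R ^ 2 * ‖h 0‖) ≤ ∫⁻ z in ball (0:ℂ) R, ENNReal.ofReal ‖h z‖ := by
  rw [polar_ball _ (by fun_prop)]
  have : ENNReal.ofReal (Real.pi * R ^ 2 * ‖h 0‖) =
      ∫⁻ r in Ioo (0:ℝ) R, ENNReal.ofReal r * ENNReal.ofReal (2 * Real.pi * ‖h 0‖) := by
    rw [lintegral_mul_const _ (by fun_prop), lint_r R hR, ← ENNReal.ofReal_mul (by positivity)]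
    congr 1; ring
  rw [this]
  refine setLIntegral_mono' measurableSet_Ioo fun r hr => ?_
  gcongr
  exact submean_circle h r hr.1 (hd.mono (closedBall_subset_ball hr.2))

lemma lint_translate (G : ℂ → ℝ≥0∞) (hG : Measurable G) (a : ℂ) (R : ℝ) :
    ∫⁻ z in ball a R, G z = ∫⁻ z in ball (0:ℂ) R, G (z + a) := by
  have hpre : (fun z => z + a) ⁻¹' (ball a R) = ball 0 R := by
    ext z; simp [dist_eq_norm]
  rw [← hpre]
  exact ((measurePreserving_add_right volume a).setLIntegral_comp_preimage measurableSet_ball hG).symm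

lemma submean_ball (h : ℂ → ℂ) (hmeas : Measurable h) (a : ℂ) (R : ℝ) (hR : 0 < R)
    (hd : DifferentiableOn ℂ h (ball a R)) :
    ENNReal.ofReal (Real.pi * R ^ 2 * ‖h a‖) ≤ ∫⁻ z in ball a R, ENNReal.ofReal ‖h z‖ := by
  have h1 := submean_ball0 (fun z => h (z + a)) (by fun_prop) R hR (by
    refine hd.comp (by fun_prop) ?_
    intro z hz; simpa [dist_eq_norm] using hz)
  simp only [zero_add] at h1
  rwa [lint_translate _ (by fun_prop)]

lemma phi_ge (a z : ℂ) (ha : ‖a‖ < 1) (hz : ‖z - a‖ < (1 - ‖a‖) / 2) :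
    1 - ‖a‖ ≤ ‖1 - (starRingEnd ℂ) a * z‖ ∧ ‖1 - (starRingEnd ℂ) a * z‖ ≤ 3 * (1 - ‖a‖) := by
  have e : 1 - (starRingEnd ℂ) a * z = ((1 - ‖a‖ ^ 2 : ℝ) : ℂ) - (starRingEnd ℂ) a * (z - a) := by
    have : (starRingEnd ℂ) a * a = ((‖a‖ ^ 2 : ℝ) : ℂ) := by
      rw [mul_comm, Complex.mul_conj, Complex.normSq_eq_norm_sq]
    push_cast at this ⊢
    rw [mul_sub, this]; ring
  have n0 := norm_nonneg a
  have n1 : ‖((1 - ‖a‖ ^ 2 : ℝ) : ℂ)‖ = 1 - ‖a‖ ^ 2 := by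
    rw [Complex.norm_real, Real.norm_of_nonneg]; nlinarith
  have n2 : ‖(starRingEnd ℂ) a * (z - a)‖ ≤ ‖a‖ * ((1 - ‖a‖) / 2) := by
    rw [norm_mul, RCLike.norm_conj]; gcongr
  rw [e]
  constructor
  · have := norm_sub_norm_le ((1 - ‖a‖ ^ 2 : ℝ) : ℂ) ((starRingEnd ℂ) a * (z - a))
    nlinarith
  · have := norm_sub_le ((1 - ‖a‖ ^ 2 : ℝ) : ℂ) ((starRingEnd ℂ) a * (z - a))
    nlinarith

lemma bloch_of_qs (s : ℝ) (hs : 0 < s) (f : ℂ → ℂ) (hf : MemQs s f) (a : ℂ) (ha : a ∈ ball (0:ℂ) 1) :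
    (1 - ‖a‖) * ‖deriv f a‖ ≤ 2 / Real.sqrt (Real.log 2 ^ s) *
      Real.sqrt (⨆ a ∈ ball (0:ℂ) 1, qsInt s f a).toReal := by
  have ha' : ‖a‖ < 1 := by simpa using ha
  set δ := 1 - ‖a‖ with hδ
  have hδ0 : 0 < δ := by linarith
  have hl2 : 0 < Real.log 2 := Real.log_pos (by norm_num)
  have hsub : ball a (δ / 2) ⊆ ball (0:ℂ) 1 := by
    intro z hz
    rw [mem_ball, dist_eq_norm] at hz
    rw [mem_ball_zero_iff]
    have := norm_add_le (z - a) a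
    rw [sub_add_cancel] at this
    linarith
  have hd : DifferentiableOn ℂ (deriv f) (ball (0:ℂ) 1) := hf.1.deriv isOpen_ball
  have h1 := submean_ball (fun z => deriv f z ^ 2) (by
    exact (measurable_deriv f).pow_const 2) a (δ / 2) (by linarith) ((hd.mono hsub).pow 2)
  have h2 : ENNReal.ofReal (Real.log 2 ^ s) * ∫⁻ z in ball a (δ/2), ENNReal.ofReal ‖deriv f z ^ 2‖ ≤
      ∫⁻ z in ball (0:ℂ) 1,
    ENNReal.ofReal (‖deriv f z‖ ^ 2 * (Real.log ‖(1 - (starRingEnd ℂ) a * z) / (z - a)‖) ^ s) := by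
    rw [← lintegral_const_mul _ (by have := measurable_deriv f; fun_prop)]
    refine le_trans ?_ (lintegral_mono_set hsub)
    have hae : ∀ᵐ z ∂(volume.restrict (ball a (δ/2))), z ≠ a := by
      apply ae_restrict_of_ae
      exact Measure.ae_ne volume a
    apply lintegral_mono_ae
    filter_upwards [hae, ae_restrict_mem measurableSet_ball] with z hza hz
    rw [mem_ball, dist_eq_norm] at hz
    rw [← ENNReal.ofReal_mul (by positivity), norm_pow, mul_comm]
    apply ENNReal.ofReal_le_ofReal
    gcongr
    have hp : 0 < ‖z - a‖ := norm_pos_iff.mpr (sub_ne_zero.mpr hza)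
    rw [norm_div, le_div_iff₀ hp]
    have := (phi_ge a z ha' hz).1
    linarith
  have h3 : qsInt s f a ≤ ⨆ a ∈ ball (0:ℂ) 1, qsInt s f a := le_iSup₂ (f := fun a _ => qsInt s f a) a ha
  have hpi := Real.pi_pos
  have h4 : ENNReal.ofReal (Real.log 2 ^ s * (δ / 2) ^ 2 * ‖deriv f a‖ ^ 2) ≤ qsInt s f a := by
    unfold qsInt
    have e : ENNReal.ofReal (Real.log 2 ^ s * (δ / 2) ^ 2 * ‖deriv f a‖ ^ 2) = (ENNReal.ofReal Real.pi)⁻¹ *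
      (ENNReal.ofReal (Real.log 2 ^ s) * ENNReal.ofReal (Real.pi * (δ / 2) ^ 2 * ‖deriv f a ^ 2‖)) := by
      rw [← ENNReal.ofReal_inv_of_pos hpi, ← ENNReal.ofReal_mul (by positivity),
        ← ENNReal.ofReal_mul (by positivity), norm_pow]
      congr 1; field_simp
    rw [e]
    gcongr
    refine le_trans ?_ h2
    gcongr
  have h5 := ENNReal.toReal_mono hf.2.ne (h4.trans h3)
  rw [ENNReal.toReal_ofReal (by positivity)] at h5
  have h6 := Real.sqrt_le_sqrt h5
  rw [mul_assoc, Real.sqrt_mul (by positivity), ← mul_pow, Real.sqrt_sq (by positivity)] at h6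
  have hq : 0 < Real.sqrt (Real.log 2 ^ s) := by positivity
  rw [div_mul_eq_mul_div, le_div_iff₀ hq]
  nlinarith
lemma growth (f : ℂ → ℂ) (hf : DifferentiableOn ℂ f (ball (0:ℂ) 1)) (M : ℝ)
    (hM : ∀ z ∈ ball (0:ℂ) 1, (1 - ‖z‖) * ‖deriv f z‖ ≤ M) (z : ℂ) (hz : z ∈ ball (0:ℂ) 1) :
    ‖f z‖ ≤ (‖f 0‖ / Real.log 2 + M) * Real.log (2 / (1 - ‖z‖)) := by
  have hz' : ‖z‖ < 1 := by simpa using hz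
  have hM0 : 0 ≤ M := le_trans (by simp) (hM 0 (by simp))
  have hpos : ∀ x ∈ Icc (0:ℝ) 1, 0 < 1 - x * ‖z‖ := by
    intro x hx
    have := mul_le_of_le_one_left (norm_nonneg z) hx.2
    linarith
  have hmem : ∀ x ∈ Icc (0:ℝ) 1, (x:ℂ) * z ∈ ball (0:ℂ) 1 := by
    intro x hx
    rw [mem_ball_zero_iff, norm_mul, Complex.norm_real, Real.norm_of_nonneg hx.1]
    have := hpos x hx
    linarith
  have hder : ∀ x ∈ Icc (0:ℝ) 1, HasDerivAt (fun x : ℝ => f (x * z)) (deriv f (x * z) * z) x := by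
    intro x hx
    have h1 : HasDerivAt f (deriv f (x * z)) ((x:ℂ) * z) :=
      (hf.differentiableAt (isOpen_ball.mem_nhds (hmem x hx))).hasDerivAt
    have h2 : HasDerivAt (fun x : ℝ => (x:ℂ) * z) (1 * z) x :=
      (Complex.ofRealCLM.hasDerivAt (x := x)).mul_const z
    rw [one_mul] at h2
    exact HasDerivAt.comp x h1 h2
  have hB : ∀ x ∈ Icc (0:ℝ) 1, HasDerivAt (fun x : ℝ => ‖f 0‖ - M * Real.log (1 - x * ‖z‖))
      (M * (‖z‖ / (1 - x * ‖z‖))) x := by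
    intro x hx
    have h1 : HasDerivAt (fun x : ℝ => 1 - x * ‖z‖) (-(1 * ‖z‖)) x :=
      ((hasDerivAt_id x).mul_const ‖z‖).const_sub 1
    have h2 := ((h1.log (hpos x hx).ne').const_mul M).const_sub ‖f 0‖
    have e : M * (‖z‖ / (1 - x * ‖z‖)) = -(M * (-(1 * ‖z‖) / (1 - x * ‖z‖))) := by ring
    rw [e]; exact h2
  have key := image_norm_le_of_norm_deriv_right_le_deriv_boundary' (a := (0:ℝ)) (b := 1)
    (f := fun x : ℝ => f (x * z)) (f' := fun x : ℝ => deriv f (x * z) * z)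
    (B := fun x : ℝ => ‖f 0‖ - M * Real.log (1 - x * ‖z‖)) (B' := fun x => M * (‖z‖ / (1 - x * ‖z‖)))
    (fun x hx => (hder x hx).continuousAt.continuousWithinAt)
    (fun x hx => (hder x (Ico_subset_Icc_self hx)).hasDerivWithinAt)
    (by simp)
    (fun x hx => (hB x hx).continuousAt.continuousWithinAt)
    (fun x hx => (hB x (Ico_subset_Icc_self hx)).hasDerivWithinAt)
    (by
      intro x hx
      have hx' := Ico_subset_Icc_self hx
      have h1 := hM _ (hmem x hx')
      rw [norm_mul (x:ℂ), Complex.norm_real, Real.norm_of_nonneg hx.1] at h1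
      have h2 := hpos x hx'
      rw [norm_mul, ← mul_div_assoc, le_div_iff₀ h2]
      calc _ = ((1 - x * ‖z‖) * ‖deriv f (x * z)‖) * ‖z‖ := by ring
        _ ≤ _ := by gcongr)
    (x := 1) (by simp)
  simp only [Complex.ofReal_one, one_mul] at key
  have hd : 0 < 1 - ‖z‖ := by linarith
  have hl2 : 0 < Real.log 2 := Real.log_pos (by norm_num)
  have hlog : Real.log (1 - ‖z‖) ≤ 0 := Real.log_nonpos hd.le (by linarith [norm_nonneg z])
  rw [Real.log_div (by norm_num) hd.ne']
  have : ‖f 0‖ ≤ ‖f 0‖ / Real.log 2 * (Real.log 2 - Real.log (1 - ‖z‖)) := by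
    rw [div_mul_eq_mul_div, le_div_iff₀ hl2]
    have := norm_nonneg (f 0)
    nlinarith
  nlinarith

lemma hasSum_tc (f : ℂ → ℂ) (hf : DifferentiableOn ℂ f (ball (0:ℂ) 1)) (z : ℂ)
    (hz : z ∈ ball (0:ℂ) 1) : HasSum (fun k => tc f k * z ^ k) (f z) := by
  have := Complex.hasSum_taylorSeries_on_ball hf hz
  have e : (fun k => tc f k * z ^ k) =
      fun n : ℕ ↦ (n.factorial : ℂ)⁻¹ • (z - 0) ^ n • iteratedDeriv n f 0 := by
    funext k
    simp only [tc, sub_zero, smul_eq_mul]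
    ring
  rw [e]; exact this

lemma parseval_le (f : ℂ → ℂ) (hf : DifferentiableOn ℂ f (ball (0:ℂ) 1)) (r B : ℝ) (hr0 : 0 ≤ r)
    (hr : r < 1) (hB : ∀ z, ‖z‖ = r → ‖f z‖ ≤ B) (N : ℕ) :
    ∑ k ∈ Finset.range N, (‖tc f k‖ * r ^ k) ^ 2 ≤ B ^ 2 := by
  have : Fact (0 < 2 * Real.pi) := ⟨by positivity⟩
  let e : ℕ → C(AddCircle (2 * Real.pi), ℂ) := fun k => fourier (k : ℤ)
  let c : ℕ → ℂ := fun k => tc f k * r ^ k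
  have hB0 : 0 ≤ B := (norm_nonneg _).trans (hB r (by simp [abs_of_nonneg hr0]))
  have hcs : Summable fun k => ‖c k • e k‖ := by
    have := (hasSum_tc f hf (r:ℂ) (by simp [abs_of_nonneg hr0, hr])).summable.norm
    refine this.congr fun k => ?_
    rw [norm_smul, fourier_norm, mul_one]
  have hsum : HasSum (fun k => c k • e k) (∑' k, c k • e k) := hcs.of_norm.hasSum
  set F := ∑' k, c k • e k with hF
  have hFB : ‖F‖ ≤ B := by
    rw [ContinuousMap.norm_le _ hB0]
    intro x
    have h1 : HasSum (fun k => (c k • e k) x) (F x) :=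
      hsum.map (ContinuousMap.evalCLM ℂ x) (ContinuousMap.evalCLM ℂ x).continuous
    have hx1 : ‖((r:ℂ) * (AddCircle.toCircle x : ℂ))‖ = r := by
      rw [norm_mul, Circle.norm_coe, Complex.norm_real, Real.norm_of_nonneg hr0, mul_one]
    have h2 := hasSum_tc f hf ((r:ℂ) * (AddCircle.toCircle x : ℂ)) (by
      rw [mem_ball_zero_iff, hx1]; exact hr)
    have h3 : F x = f ((r:ℂ) * (AddCircle.toCircle x : ℂ)) := by
      refine h1.unique ?_
      convert h2 using 2 with k
      simp only [c, e, ContinuousMap.smul_apply, smul_eq_mul, mul_pow, fourier_apply,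
        natCast_zsmul, AddCircle.toCircle_nsmul, Circle.coe_pow]
      ring
    rw [h3]
    exact hB _ hx1
  let T := ContinuousMap.toLp (E := ℂ) 2 (AddCircle.haarAddCircle (T := 2 * Real.pi)) ℂ
  have hT : ‖T F‖ ≤ B := by
    refine le_trans ?_ hFB
    have h1 := T.le_opNorm F
    have h2 : ‖T‖ ≤ 1 := by
      have := ContinuousMap.toLp_norm_le (p := 2) (μ := AddCircle.haarAddCircle (T := 2 * Real.pi)) (E := ℂ) (𝕜 := ℂ)
      simpa [measureUnivNNReal] using this
    nlinarith [norm_nonneg F]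
  have horth : Orthonormal ℂ (fun k : ℕ => T (e k)) :=
    (orthonormal_fourier (T := 2 * Real.pi)).comp (fun k : ℕ => (k : ℤ)) Nat.cast_injective
  have hTs : HasSum (fun k => c k • T (e k)) (T F) := by
    have := hsum.map T T.continuous
    simpa [Function.comp_def] using this
  have hin : ∀ k, inner ℂ (T (e k)) (T F) = c k := by
    intro k
    have h1 : HasSum (fun j => inner ℂ (T (e k)) (c j • T (e j))) (inner ℂ (T (e k)) (T F)) :=
      hTs.mapL (innerSL ℂ (T (e k)))
    refine h1.unique ?_
    have h2 := hasSum_single (f := fun j => inner ℂ (T (e k)) (c j • T (e j))) k (by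
      intro j hj
      rw [inner_smul_right, horth.2 hj.symm, mul_zero])
    convert h2 using 1
    rw [inner_smul_right, inner_self_eq_norm_sq_to_K, horth.1 k]; simp
  have hb := horth.sum_inner_products_le (T F) (s := Finset.range N)
  simp only [hin] at hb
  have : ∀ k, ‖c k‖ = ‖tc f k‖ * r ^ k := by
    intro k
    simp [c, abs_of_nonneg hr0]
  simp only [this] at hb
  refine hb.trans ?_
  gcongr

lemma exists_pow16 (k : ℕ) : ∃ j : ℕ, 4 * (k + 1) ≤ 16 ^ j ∧ 16 ^ j ≤ 64 * (k + 1) := by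
  induction k using Nat.strong_induction_on with
  | _ k ih =>
    by_cases h : k + 1 ≤ 4
    · exact ⟨1, by omega, by omega⟩
    · by_cases h' : k + 1 < 16
      · exact ⟨2, by omega, by omega⟩
      · obtain ⟨j, h1, h2⟩ := ih ((k + 1) / 16 + 1 - 1 ) (by omega)
        by_cases h3 : 4 * (k + 1) ≤ 16 ^ j
        · exact ⟨j, h3, by omega⟩
        · refine ⟨j + 1, ?_, ?_⟩
          · rw [pow_succ]; omega
          · rw [pow_succ]; omega

lemma sum_abs_le (f : ℂ → ℂ) (hf : DifferentiableOn ℂ f (ball (0:ℂ) 1)) (K : ℝ)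
    (hK : ∀ z ∈ ball (0:ℂ) 1, ‖f z‖ ≤ K * Real.log (2 / (1 - ‖z‖))) (j N : ℕ) :
    ∑ k ∈ Finset.range N, ‖tc f k‖ * ((1 - 1 / 16 ^ j : ℝ)) ^ (2 * k) ≤ (4 * K) * 8 ^ j := by
  have hK0 : 0 ≤ K := by
    have := (norm_nonneg _).trans (hK 0 (by simp))
    refine nonneg_of_mul_nonneg_left this (Real.log_pos (by norm_num))
  set r : ℝ := 1 - 1 / 16 ^ j with hr
  have h16 : (1:ℝ) ≤ 16 ^ j := one_le_pow₀ (by norm_num)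
  have hr0 : 0 ≤ r := by
    rw [hr, sub_nonneg, div_le_one (by positivity)]; exact h16
  have hr1 : r < 1 := by
    have : 0 < 1 / (16:ℝ) ^ j := by positivity
    linarith
  have hlog : Real.log (2 / (1 - r)) ≤ 4 * 2 ^ j := by
    have e : 2 / (1 - r) = 2 ^ (4 * j + 1) := by
      rw [hr, pow_succ, pow_mul, _root_.sub_sub_cancel, div_div_eq_mul_div, div_one, mul_comm]
      norm_num
    rw [e, Real.log_pow]
    have h1 : Real.log 2 ≤ 1 := by linarith [Real.log_two_lt_d9]
    have h0 : 0 < Real.log 2 := Real.log_pos (by norm_num)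
    have h2 : ((4 * j + 1 : ℕ) : ℝ) ≤ 4 * 2 ^ j := by
      have : j + 1 ≤ 2 ^ j := Nat.lt_two_pow_self
      have : 4 * j + 1 ≤ 4 * 2 ^ j := by omega
      exact_mod_cast this
    nlinarith [(by positivity : (0:ℝ) ≤ ((4 * j + 1 : ℕ) : ℝ))]
  have hp := parseval_le f hf r (K * (4 * 2 ^ j)) hr0 hr1 (by
    intro z hz
    refine (hK z (by rw [mem_ball_zero_iff, hz]; exact hr1)).trans ?_
    rw [hz]; gcongr) N
  have hg : ∑ k ∈ Finset.range N, (r ^ k) ^ 2 ≤ (4 ^ j) ^ 2 := by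
    have hr2 : r ^ 2 < 1 := by nlinarith
    have h1 : Summable fun k : ℕ => (r ^ 2) ^ k := summable_geometric_of_lt_one (by positivity) hr2
    have h2 := h1.sum_le_tsum (Finset.range N) (fun k _ => by positivity)
    rw [tsum_geometric_of_lt_one (by positivity) hr2] at h2
    have h3 : (1 - r ^ 2)⁻¹ ≤ (4 ^ j) ^ 2 := by
      rw [inv_le_comm₀ (by linarith) (by positivity), ← pow_mul, mul_comm, pow_mul]
      have : ((4:ℝ)^2)^j = 16 ^ j := by norm_num
      rw [this]
      have : (1 - r) = ((16:ℝ) ^ j)⁻¹ := by rw [hr]; simp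
      rw [← this]; nlinarith
    refine le_trans (le_of_eq ?_) (h2.trans h3)
    refine Finset.sum_congr rfl fun k _ => ?_
    ring
  have hcs := Finset.sum_mul_sq_le_sq_mul_sq (Finset.range N) (fun k => ‖tc f k‖ * r ^ k) (fun k => r ^ k)
  have h5 : (∑ k ∈ Finset.range N, ‖tc f k‖ * r ^ (2 * k)) ^ 2 ≤ ((4 * K) * 8 ^ j) ^ 2 := by
    calc _ = (∑ k ∈ Finset.range N, ‖tc f k‖ * r ^ k * r ^ k) ^ 2 := by
          congr 1; refine Finset.sum_congr rfl fun k _ => ?_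
          ring
      _ ≤ _ := hcs
      _ ≤ (K * (4 * 2 ^ j)) ^ 2 * (4 ^ j) ^ 2 := by gcongr
      _ = _ := by
        rw [show (8:ℝ) = 2 * 4 by norm_num, mul_pow (2:ℝ) 4]; ring
  exact (sq_le_sq₀ (Finset.sum_nonneg fun k _ => by positivity) (by positivity)).mp h5

lemma coeff_summable (f : ℂ → ℂ) (hf : DifferentiableOn ℂ f (ball (0:ℂ) 1)) (K : ℝ)
    (hK : ∀ z ∈ ball (0:ℂ) 1, ‖f z‖ ≤ K * Real.log (2 / (1 - ‖z‖))) :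
    Summable fun k : ℕ => ‖tc f k‖ / (k + 1) := by
  have hK0 : 0 ≤ K := by
    have := (norm_nonneg _).trans (hK 0 (by simp))
    refine nonneg_of_mul_nonneg_left this (Real.log_pos (by norm_num))
  have hr0 : ∀ j : ℕ, (0:ℝ) ≤ 1 - 1 / 16 ^ j := by
    intro j
    have h16 : (1:ℝ) ≤ 16 ^ j := one_le_pow₀ (by norm_num)
    rw [sub_nonneg, div_le_one (by positivity)]; exact h16
  let w : ℕ → ℕ → ℝ := fun j k => 1 / 16 ^ j * (1 - 1 / 16 ^ j : ℝ) ^ (2 * k)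
  have hw0 : ∀ j k, 0 ≤ w j k := fun j k => by have := hr0 j; positivity
  have hgeo : Summable fun j : ℕ => (1 / 2 : ℝ) ^ j := summable_geometric_two
  refine summable_of_sum_range_le (c := 128 * (4 * K * 2)) (fun k => by positivity) (fun N => ?_)
  have hws : ∀ k, Summable fun j => w j k := by
    intro k
    refine Summable.of_nonneg_of_le (fun j => hw0 j k) (fun j => ?_)
      (summable_geometric_of_lt_one (by norm_num) (by norm_num : (1/16:ℝ) < 1))
    have h1 : (1 - 1 / 16 ^ j : ℝ) ^ (2 * k) ≤ 1 := pow_le_one₀ (hr0 j) (by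
      have : 0 < 1 / (16:ℝ) ^ j := by positivity
      linarith)
    calc w j k ≤ 1 / 16 ^ j * 1 := by dsimp only [w]; gcongr
      _ = _ := by rw [mul_one, div_pow, one_pow]
  have hlow : ∀ k : ℕ, 1 / ((k:ℝ) + 1) ≤ 128 * ∑' j, w j k := by
    intro k
    obtain ⟨j, h1, h2⟩ := exists_pow16 k
    have h1' : 4 * ((k:ℝ) + 1) ≤ 16 ^ j := by exact_mod_cast h1
    have h2' : (16:ℝ) ^ j ≤ 64 * ((k:ℝ) + 1) := by exact_mod_cast h2
    have h3 : w j k ≤ ∑' j, w j k := (hws k).le_tsum j (fun i _ => hw0 i k)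
    have h16 : (1:ℝ) ≤ 16 ^ j := one_le_pow₀ (by norm_num)
    have h4 : (1/2:ℝ) ≤ (1 - 1 / 16 ^ j : ℝ) ^ (2 * k) := by
      have := one_add_mul_le_pow (a := - (1 / 16 ^ j : ℝ)) (by
        have := hr0 j; linarith) (2 * k)
      rw [← sub_eq_add_neg] at this
      refine le_trans ?_ this
      push_cast
      have : 2 * (k:ℝ) * (1 / 16 ^ j) ≤ 1 / 2 := by
        rw [mul_one_div, div_le_iff₀ (by positivity)]; linarith
      linarith
    have h5 : 1 / ((k:ℝ) + 1) ≤ 64 * (1 / 16 ^ j) := by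
      rw [mul_one_div, div_le_div_iff₀ (by positivity) (by positivity)]; linarith
    have h6 : 1 / 16 ^ j * (1/2) ≤ w j k := by dsimp only [w]; gcongr
    linarith
  calc ∑ k ∈ Finset.range N, ‖tc f k‖ / ((k:ℝ) + 1)
      ≤ ∑ k ∈ Finset.range N, ‖tc f k‖ * (128 * ∑' j, w j k) := by
        refine Finset.sum_le_sum fun k _ => ?_
        rw [div_eq_mul_one_div]
        gcongr
        exact hlow k
    _ = 128 * ∑' j, ∑ k ∈ Finset.range N, ‖tc f k‖ * w j k := by
        rw [Summable.tsum_finsetSum (fun k _ => (hws k).mul_left _), Finset.mul_sum]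
        refine Finset.sum_congr rfl fun k _ => ?_
        rw [tsum_mul_left]; ring
    _ ≤ 128 * ∑' j : ℕ, (4 * K) * (1 / 2 : ℝ) ^ j := by
        refine mul_le_mul_of_nonneg_left ?_ (by norm_num)
        refine Summable.tsum_le_tsum (fun j => ?_)
          (summable_sum fun k _ => (hws k).mul_left _) (hgeo.mul_left _)
        have h1 := sum_abs_le f hf K hK j N
        calc _ = 1 / 16 ^ j * ∑ k ∈ Finset.range N, ‖tc f k‖ * ((1 - 1 / 16 ^ j : ℝ)) ^ (2 * k) := by
              rw [Finset.mul_sum]; refine Finset.sum_congr rfl fun k _ => ?_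
              dsimp only [w]; ring
          _ ≤ 1 / 16 ^ j * ((4 * K) * 8 ^ j) := by gcongr
          _ = _ := by
            rw [show (16:ℝ) = 2 * 8 by norm_num, mul_pow, div_pow, one_pow]; field_simp
    _ = 128 * (4 * K * 2) := by rw [tsum_mul_left, tsum_geometric_two]
lemma norm_one_sub_circleMap (r θ : ℝ) :
    ‖1 - circleMap 0 r θ‖ ^ 2 = (1 - r) ^ 2 + 2 * r * (1 - Real.cos θ) := by
  rw [← Complex.normSq_eq_norm_sq, circleMap, Complex.exp_mul_I, Complex.normSq_apply]
  simp [← Complex.ofReal_cos, ← Complex.ofReal_sin]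
  linear_combination r ^ 2 * Real.sin_sq_add_cos_sq θ

lemma kernel_lower (r θ : ℝ) (hr0 : 0 < r) (hr : r < 1) (hθ : |θ| ≤ Real.pi) :
    ((1 - r) ^ 2 + θ ^ 2) / 80 ≤ ‖1 - circleMap 0 r θ‖ ^ 2 := by
  rw [norm_one_sub_circleMap]
  have h1 := Real.cos_le_one_sub_mul_cos_sq hθ
  have hpi : Real.pi ^ 2 ≤ 10 := by nlinarith [Real.pi_lt_d2, Real.pi_gt_three]
  have hpi0 : 0 < Real.pi ^ 2 := by positivity
  have h2 : θ ^ 2 ≤ 10 := le_trans (by rw [← sq_abs]; gcongr) hpi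
  have h3 : θ ^ 2 / 5 ≤ 2 / Real.pi ^ 2 * θ ^ 2 := by
    rw [div_mul_eq_mul_div, le_div_iff₀ hpi0]; nlinarith [sq_nonneg θ]
  have h4 : θ ^ 2 / 5 ≤ 1 - Real.cos θ := by linarith
  rcases le_total r (1/2) with h | h
  · nlinarith [sq_nonneg θ]
  · nlinarith [sq_nonneg θ, sq_nonneg (1 - r)]

lemma lint_cauchy (δ : ℝ) (hδ : 0 < δ) :
    ∫⁻ θ : ℝ, ENNReal.ofReal (1 / (δ ^ 2 + θ ^ 2)) = ENNReal.ofReal (Real.pi / δ) := by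
  have e : ∀ θ : ℝ, 1 / (δ ^ 2 + θ ^ 2) = (δ ^ 2)⁻¹ * (1 + (θ / δ) ^ 2)⁻¹ := by
    intro θ; field_simp
  have hi : Integrable fun θ : ℝ => (δ ^ 2)⁻¹ * (1 + (θ / δ) ^ 2)⁻¹ :=
    (integrable_inv_one_add_sq.comp_div hδ.ne').const_mul _
  simp_rw [e]
  rw [← ofReal_integral_eq_lintegral_ofReal hi (ae_of_all _ fun θ => by positivity)]
  congr 1
  rw [integral_const_mul, Measure.integral_comp_div (fun x : ℝ => (1 + x ^ 2)⁻¹),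
    integral_univ_inv_one_add_sq, abs_of_pos hδ, smul_eq_mul]
  field_simp

lemma circ_kernel (r : ℝ) (hr0 : 0 < r) (hr : r < 1) :
    ∫⁻ θ in Ioo (-Real.pi) Real.pi, ENNReal.ofReal (1 / ‖1 - circleMap 0 r θ‖ ^ 2) ≤
      ENNReal.ofReal (80 * Real.pi / (1 - r)) := by
  have hd : 0 < 1 - r := by linarith
  calc _ ≤ ∫⁻ θ in Ioo (-Real.pi) Real.pi, ENNReal.ofReal 80 * ENNReal.ofReal (1 / ((1 - r) ^ 2 + θ ^ 2)) := by
        refine setLIntegral_mono' measurableSet_Ioo fun θ hθ => ?_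
        rw [← ENNReal.ofReal_mul (by norm_num)]
        apply ENNReal.ofReal_le_ofReal
        have h1 := kernel_lower r θ hr0 hr (abs_le.mpr ⟨hθ.1.le, hθ.2.le⟩)
        have h2 : 0 < (1 - r) ^ 2 + θ ^ 2 := by positivity
        rw [mul_one_div, div_le_div_iff₀ (by linarith) h2]
        linarith
    _ ≤ ∫⁻ θ : ℝ, ENNReal.ofReal 80 * ENNReal.ofReal (1 / ((1 - r) ^ 2 + θ ^ 2)) :=
        setLIntegral_le_lintegral _ _
    _ = _ := by
        rw [lintegral_const_mul _ (by fun_prop), lint_cauchy _ hd, ← ENNReal.ofReal_mul (by norm_num)]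
        congr 1; ring

lemma radial (s δ : ℝ) (hs : 0 < s) (hδ : 0 < δ) (hδ1 : δ ≤ 1) :
    ∫⁻ x in Ioo (0:ℝ) 1, ENNReal.ofReal ((δ * x / (x + δ) ^ 2) ^ s * (1 / x)) ≤
      ENNReal.ofReal (2 / s) := by
  have hsub : Ioo (0:ℝ) 1 ⊆ Ioc 0 δ ∪ Ioc δ 1 := by
    rw [Ioc_union_Ioc_eq_Ioc hδ.le hδ1]; exact Ioo_subset_Ioc_self
  refine (lintegral_mono_set hsub).trans ((lintegral_union_le _ _ _).trans ?_)
  have e2 : ENNReal.ofReal (2 / s) = ENNReal.ofReal (1 / s) + ENNReal.ofReal (1 / s) := by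
    rw [← ENNReal.ofReal_add (by positivity) (by positivity)]; congr 1; ring
  rw [e2]
  gcongr
  · calc _ ≤ ∫⁻ x in Ioc (0:ℝ) δ, ENNReal.ofReal (δ ^ (-s) * x ^ (s - 1)) := by
          refine setLIntegral_mono' measurableSet_Ioc fun x hx => ?_
          apply ENNReal.ofReal_le_ofReal
          have hx0 := hx.1
          rw [Real.rpow_sub_one hx0.ne', Real.rpow_neg hδ.le, mul_one_div, ← mul_div_assoc,
            ← Real.inv_rpow hδ.le, ← Real.mul_rpow (by positivity) (by positivity)]
          gcongr
          rw [div_le_iff₀ (by positivity)]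
          have : δ⁻¹ * x * (x + δ) ^ 2 = δ * x + (x ^ 3 / δ + 2 * x ^ 2) := by field_simp; ring
          rw [this]; linarith [(by positivity : 0 ≤ x ^ 3 / δ + 2 * x ^ 2)]
      _ = ENNReal.ofReal (1 / s) := by
          have hint : IntervalIntegrable (fun x : ℝ => δ ^ (-s) * x ^ (s - 1)) volume 0 δ :=
            (intervalIntegral.intervalIntegrable_rpow' (by linarith)).const_mul _
          rw [← ofReal_integral_eq_lintegral_ofReal]
          · rw [← intervalIntegral.integral_of_le hδ.le, intervalIntegral.integral_const_mul,
              integral_rpow (Or.inl (by linarith))]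
            congr 1
            rw [sub_add_cancel, Real.zero_rpow hs.ne', sub_zero, ← mul_div_assoc, ← Real.rpow_add hδ]
            simp
          · exact (intervalIntegrable_iff_integrableOn_Ioc_of_le hδ.le).mp hint
          · filter_upwards [ae_restrict_mem measurableSet_Ioc] with x hx
            have := hx.1
            simp only [Pi.zero_apply]; positivity
  · calc _ ≤ ∫⁻ x in Ioc δ 1, ENNReal.ofReal (δ ^ s * x ^ (- s - 1)) := by
          refine setLIntegral_mono' measurableSet_Ioc fun x hx => ?_
          apply ENNReal.ofReal_le_ofReal
          have hx0 : 0 < x := hδ.trans hx.1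
          rw [Real.rpow_sub_one hx0.ne', Real.rpow_neg hx0.le, mul_one_div, ← mul_div_assoc,
            ← Real.inv_rpow hx0.le, ← Real.mul_rpow (by positivity) (by positivity)]
          gcongr
          rw [div_le_iff₀ (by positivity)]
          have : δ * x⁻¹ * (x + δ) ^ 2 = δ * x + (δ ^ 3 / x + 2 * δ ^ 2) := by field_simp; ring
          rw [this]; linarith [(by positivity : 0 ≤ δ ^ 3 / x + 2 * δ ^ 2)]
      _ ≤ ENNReal.ofReal (1 / s) := by
          have h0 : (0:ℝ) ∉ Set.uIcc δ 1 := by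
            rw [uIcc_of_le hδ1]; intro h; linarith [h.1]
          have hint : IntervalIntegrable (fun x : ℝ => δ ^ s * x ^ (- s - 1)) volume δ 1 :=
            (intervalIntegral.intervalIntegrable_rpow (Or.inr h0)).const_mul _
          rw [← ofReal_integral_eq_lintegral_ofReal]
          · rw [← intervalIntegral.integral_of_le hδ1, intervalIntegral.integral_const_mul,
              integral_rpow (Or.inr ⟨by linarith, h0⟩)]
            apply ENNReal.ofReal_le_ofReal
            rw [sub_add_cancel, Real.one_rpow, div_neg, ← neg_div, neg_sub, ← mul_div_assoc]
            gcongr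
            rw [mul_sub, ← Real.rpow_add hδ]
            simp
            positivity
          · exact (intervalIntegrable_iff_integrableOn_Ioc_of_le hδ1).mp hint
          · filter_upwards [ae_restrict_mem measurableSet_Ioc] with x hx
            have := hδ.trans hx.1
            simp only [Pi.zero_apply]; positivity

lemma far_int (s δ : ℝ) (hs : 0 < s) (hδ : 0 < δ) (hδ1 : δ ≤ 1) :
    ∫⁻ z in ball (0:ℂ) 1, ENNReal.ofReal (1 / ‖1 - z‖ ^ 2 * (δ * (1 - ‖z‖) / (1 - ‖z‖ + δ) ^ 2) ^ s) ≤
      ENNReal.ofReal (160 * Real.pi / s) := by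
  rw [polar_ball _ (by fun_prop)]
  calc _ ≤ ∫⁻ r in Ioo (0:ℝ) 1, ENNReal.ofReal (80 * Real.pi) *
        ENNReal.ofReal ((δ * (1 - r) / (1 - r + δ) ^ 2) ^ s * (1 / (1 - r))) := by
        refine setLIntegral_mono' measurableSet_Ioo fun r hr => ?_
        have hr1 : 0 < 1 - r := by linarith [hr.2]
        have hp := Real.pi_pos
        have e : ∀ θ : ℝ, ENNReal.ofReal (1 / ‖1 - circleMap 0 r θ‖ ^ 2 *
            (δ * (1 - ‖circleMap 0 r θ‖) / (1 - ‖circleMap 0 r θ‖ + δ) ^ 2) ^ s) =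
            ENNReal.ofReal (1 / ‖1 - circleMap 0 r θ‖ ^ 2) *
              ENNReal.ofReal ((δ * (1 - r) / (1 - r + δ) ^ 2) ^ s) := by
          intro θ
          rw [← ENNReal.ofReal_mul (by positivity), norm_circleMap_zero, abs_of_pos hr.1]
        simp_rw [e]
        rw [lintegral_mul_const _ (by have := (continuous_circleMap 0 r).measurable; fun_prop)]
        calc _ ≤ 1 * (ENNReal.ofReal (80 * Real.pi / (1 - r)) *
              ENNReal.ofReal ((δ * (1 - r) / (1 - r + δ) ^ 2) ^ s)) := by
              gcongr
              · rw [ENNReal.ofReal_le_one]; exact hr.2.le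
              · exact circ_kernel r hr.1 hr.2
          _ = _ := by
            rw [one_mul, ← ENNReal.ofReal_mul (by positivity), ← ENNReal.ofReal_mul (by positivity)]
            congr 1; ring
    _ = ENNReal.ofReal (80 * Real.pi) * ∫⁻ r in Ioo (0:ℝ) 1,
        ENNReal.ofReal ((δ * (1 - r) / (1 - r + δ) ^ 2) ^ s * (1 / (1 - r))) := by
        rw [lintegral_const_mul _ (by fun_prop)]
    _ = ENNReal.ofReal (80 * Real.pi) * ∫⁻ x in Ioo (0:ℝ) 1,
        ENNReal.ofReal ((δ * x / (x + δ) ^ 2) ^ s * (1 / x)) := by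
        congr 1
        have hpre : (fun x : ℝ => 1 - x) ⁻¹' (Ioo (0:ℝ) 1) = Ioo 0 1 := by
          ext x; simp only [mem_preimage, mem_Ioo]; constructor <;> rintro ⟨h1, h2⟩ <;> constructor <;> linarith
        have := (Measure.measurePreserving_sub_left volume (1:ℝ)).setLIntegral_comp_preimage
          (measurableSet_Ioo (a := (0:ℝ)) (b := 1))
          (f := fun x => ENNReal.ofReal ((δ * x / (x + δ) ^ 2) ^ s * (1 / x))) (by fun_prop)
        rw [hpre] at this
        exact this
    _ ≤ ENNReal.ofReal (80 * Real.pi) * ENNReal.ofReal (2 / s) := by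
        gcongr; exact radial s δ hs hδ hδ1
    _ = _ := by
        rw [← ENNReal.ofReal_mul (by positivity)]; congr 1; ring

lemma near_int (a : ℂ) (ρ : ℝ) :
    ∫⁻ z in ball a ρ, ENNReal.ofReal (1 / ‖z - a‖) ≤ ENNReal.ofReal (2 * Real.pi * ρ) := by
  rw [lint_translate _ (by fun_prop)]
  simp only [add_sub_cancel_right]
  rw [polar_ball _ (by fun_prop)]
  calc _ ≤ ∫⁻ r in Ioo (0:ℝ) ρ, ENNReal.ofReal (2 * Real.pi) := by
        refine setLIntegral_mono' measurableSet_Ioo fun r hr => ?_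
        have hr0 := hr.1
        simp_rw [norm_circleMap_zero, abs_of_pos hr0]
        rw [setLIntegral_const, Real.volume_Ioo, ← ENNReal.ofReal_mul (by positivity),
          ← ENNReal.ofReal_mul hr0.le]
        apply ENNReal.ofReal_le_ofReal
        field_simp; linarith
    _ = _ := by
        rw [setLIntegral_const, Real.volume_Ioo, ← ENNReal.ofReal_mul (by positivity), sub_zero]

lemma phi_identity (a z : ℂ) : ‖1 - (starRingEnd ℂ) a * z‖ ^ 2 - ‖z - a‖ ^ 2 =
    (1 - ‖a‖ ^ 2) * (1 - ‖z‖ ^ 2) := by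
  simp only [← Complex.normSq_eq_norm_sq, Complex.normSq_apply]
  simp
  ring

lemma far_bound (a z : ℂ) (ha : ‖a‖ < 1) (hz : ‖z‖ < 1) (hfar : (1 - ‖a‖) / 2 ≤ ‖z - a‖) :
    0 ≤ Real.log ‖(1 - (starRingEnd ℂ) a * z) / (z - a)‖ ∧
    Real.log ‖(1 - (starRingEnd ℂ) a * z) / (z - a)‖ ≤
      50 * ((1 - ‖a‖) * (1 - ‖z‖) / (1 - ‖z‖ + (1 - ‖a‖)) ^ 2) := by
  have hid := phi_identity a z
  rw [norm_div]
  set N := ‖1 - (starRingEnd ℂ) a * z‖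
  set D := ‖z - a‖ with hD
  have hδ : 0 < 1 - ‖a‖ := by linarith
  have hx : 0 < 1 - ‖z‖ := by linarith
  have hD0 : 0 < D := by linarith
  have na := norm_nonneg a
  have nz := norm_nonneg z
  have hN0 : 0 ≤ N := norm_nonneg _
  have hprod : (1 - ‖a‖ ^ 2) * (1 - ‖z‖ ^ 2) ≤ 4 * ((1 - ‖a‖) * (1 - ‖z‖)) := by
    have : (1 - ‖a‖ ^ 2) * (1 - ‖z‖ ^ 2) = (1 + ‖a‖) * (1 + ‖z‖) * ((1 - ‖a‖) * (1 - ‖z‖)) := by ring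
    rw [this]
    have : (1 + ‖a‖) * (1 + ‖z‖) ≤ 4 := by nlinarith
    gcongr
  have hprod0 : 0 ≤ (1 - ‖a‖ ^ 2) * (1 - ‖z‖ ^ 2) := by
    apply mul_nonneg <;> nlinarith
  have hND : D ≤ N := by
    refine (sq_le_sq₀ hD0.le hN0).mp ?_
    linarith
  have hN : 0 < N := by linarith
  constructor
  · apply Real.log_nonneg
    rwa [le_div_iff₀ hD0, one_mul]
  · have h1 : Real.log (N / D) = Real.log ((N / D) ^ 2) / 2 := by
      rw [Real.log_pow]; push_cast; ring
    have h2 := Real.log_le_sub_one_of_pos (by positivity : 0 < (N / D) ^ 2)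
    have h3 : (N / D) ^ 2 - 1 = (N ^ 2 - D ^ 2) / D ^ 2 := by field_simp
    have h4 : (1 - ‖z‖) + (1 - ‖a‖) ≤ 5 * D := by
      have : ‖a‖ - ‖z‖ ≤ D := by
        rw [hD, norm_sub_rev]; exact norm_sub_norm_le a z
      linarith
    have h5 : (N ^ 2 - D ^ 2) / D ^ 2 ≤ 100 * ((1 - ‖a‖) * (1 - ‖z‖) / (1 - ‖z‖ + (1 - ‖a‖)) ^ 2) := by
      rw [hid, ← mul_div_assoc, div_le_div_iff₀ (by positivity) (by positivity)]
      calc _ ≤ 4 * ((1 - ‖a‖) * (1 - ‖z‖)) * (5 * D) ^ 2 := by gcongr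
        _ = _ := by ring
    linarith

lemma near_bound (s : ℝ) (hs : 0 < s) (a z : ℂ) (ha : ‖a‖ < 1) (hza : z ≠ a)
    (hnear : ‖z - a‖ < (1 - ‖a‖) / 2) :
    (Real.log ‖(1 - (starRingEnd ℂ) a * z) / (z - a)‖) ^ s ≤
      s ^ s * (3 * (1 - ‖a‖)) * (1 / ‖z - a‖) := by
  have h := phi_ge a z ha hnear
  rw [norm_div]
  have hD0 : 0 < ‖z - a‖ := norm_pos_iff.mpr (sub_ne_zero.mpr hza)
  have hδ : 0 < 1 - ‖a‖ := by linarith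
  set D := ‖z - a‖
  set N := ‖1 - (starRingEnd ℂ) a * z‖
  have h1 : 1 ≤ N / D := by rw [le_div_iff₀ hD0]; linarith
  have h2 := Real.log_le_rpow_div (by positivity : 0 ≤ N / D) (by positivity : 0 < 1 / s)
  calc _ ≤ ((N / D) ^ (1 / s) / (1 / s)) ^ s := by
        gcongr
        exact Real.log_nonneg h1
    _ = s ^ s * (N / D) := by
        rw [div_div_eq_mul_div, div_one, Real.mul_rpow (by positivity) hs.le, ← Real.rpow_mul (by positivity),
          one_div_mul_cancel hs.ne', Real.rpow_one, mul_comm]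
    _ ≤ s ^ s * (3 * (1 - ‖a‖) / D) := by
        gcongr
        exact h.2
    _ = _ := by ring

lemma qs_of_kernel (s : ℝ) (hs : 0 < s) : ∃ C > 0, ∀ (F : ℂ → ℂ) (K : ℝ), 0 ≤ K →
    (∀ z ∈ ball (0:ℂ) 1, ‖deriv F z‖ ≤ K / ‖1 - z‖) →
    (⨆ a ∈ ball (0:ℂ) 1, qsInt s F a) ≤ ENNReal.ofReal (C * K ^ 2) := by
  refine ⟨12 * s ^ s + 50 ^ s * (160 / s), by positivity, fun F K hK hF => iSup₂_le fun a ha => ?_⟩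
  have ha' : ‖a‖ < 1 := by simpa using ha
  set δ := 1 - ‖a‖ with hδ
  have hδ0 : 0 < δ := by linarith
  have hδ1 : δ ≤ 1 := by linarith [norm_nonneg a]
  have hpi := Real.pi_pos
  unfold qsInt
  let c1 : ℝ := 4 * K ^ 2 / δ ^ 2 * (s ^ s * (3 * δ))
  let c2 : ℝ := K ^ 2 * 50 ^ s
  have hc1 : 0 ≤ c1 := by positivity
  have hc2 : 0 ≤ c2 := by positivity
  have hpt : ∀ᵐ z ∂(volume.restrict (ball (0:ℂ) 1)),
      ENNReal.ofReal (‖deriv F z‖ ^ 2 * (Real.log ‖(1 - (starRingEnd ℂ) a * z) / (z - a)‖) ^ s) ≤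
      (ball a (δ / 2)).indicator (fun z => ENNReal.ofReal c1 * ENNReal.ofReal (1 / ‖z - a‖)) z +
      ENNReal.ofReal c2 * ENNReal.ofReal (1 / ‖1 - z‖ ^ 2 * (δ * (1 - ‖z‖) / (1 - ‖z‖ + δ) ^ 2) ^ s) := by
    have hae : ∀ᵐ z ∂(volume.restrict (ball (0:ℂ) 1)), z ≠ a := by
      apply ae_restrict_of_ae
      exact Measure.ae_ne volume a
    filter_upwards [hae, ae_restrict_mem measurableSet_ball] with z hza hz
    have hz' : ‖z‖ < 1 := by simpa using hz
    have hx : 0 < 1 - ‖z‖ := by linarith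
    have hF' := hF z hz
    have h1z : 1 - ‖z‖ ≤ ‖1 - z‖ := by
      have := norm_sub_norm_le (1:ℂ) z
      rwa [norm_one] at this
    by_cases h : z ∈ ball a (δ / 2)
    · rw [indicator_of_mem h]
      refine le_add_right ?_
      rw [← ENNReal.ofReal_mul hc1]
      apply ENNReal.ofReal_le_ofReal
      rw [mem_ball, dist_eq_norm] at h
      have hb := near_bound s hs a z ha' hza h
      have h3 : ‖deriv F z‖ ≤ 2 * K / δ := by
        refine hF'.trans ?_
        have : δ / 2 ≤ ‖1 - z‖ := by
          have := norm_sub_norm_le z a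
          linarith
        rw [div_le_div_iff₀ (by linarith) hδ0]
        nlinarith
      have hpos : 0 ≤ s ^ s * (3 * δ) * (1 / ‖z - a‖) := by positivity
      calc _ ≤ ‖deriv F z‖ ^ 2 * (s ^ s * (3 * δ) * (1 / ‖z - a‖)) :=
            mul_le_mul_of_nonneg_left hb (sq_nonneg _)
        _ ≤ (2 * K / δ) ^ 2 * (s ^ s * (3 * δ) * (1 / ‖z - a‖)) := by gcongr
        _ = _ := by dsimp only [c1]; ring
    · rw [indicator_of_notMem h, zero_add, ← ENNReal.ofReal_mul hc2]
      apply ENNReal.ofReal_le_ofReal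
      rw [mem_ball, dist_eq_norm, not_lt] at h
      have hb := far_bound a z ha' hz' h
      rw [← hδ] at hb
      calc _ ≤ (K / ‖1 - z‖) ^ 2 * (50 * (δ * (1 - ‖z‖) / (1 - ‖z‖ + δ) ^ 2)) ^ s := by
            have := hb.1
            gcongr
            exact hb.2
        _ = _ := by
            rw [Real.mul_rpow (by norm_num) (by positivity)]
            dsimp only [c2]; ring
  have hle : ∫⁻ z in ball (0:ℂ) 1,
    ENNReal.ofReal (‖deriv F z‖ ^ 2 * (Real.log ‖(1 - (starRingEnd ℂ) a * z) / (z - a)‖) ^ s) ≤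
      ENNReal.ofReal (c1 * (2 * Real.pi * (δ / 2)) + c2 * (160 * Real.pi / s)) := by
    refine (lintegral_mono_ae hpt).trans ?_
    rw [lintegral_add_right _ (by fun_prop), ENNReal.ofReal_add (by positivity) (by positivity)]
    gcongr
    · refine (setLIntegral_le_lintegral _ _).trans ?_
      rw [lintegral_indicator measurableSet_ball, lintegral_const_mul _ (by fun_prop), ENNReal.ofReal_mul hc1]
      gcongr
      exact near_int a (δ / 2)
    · rw [lintegral_const_mul _ (by fun_prop), ENNReal.ofReal_mul hc2]
      gcongr
      exact far_int s δ hs hδ0 hδ1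
  calc _ ≤ (ENNReal.ofReal Real.pi)⁻¹ * ENNReal.ofReal (c1 * (2 * Real.pi * (δ / 2)) + c2 * (160 * Real.pi / s)) := by
        gcongr
    _ = _ := by
        rw [← ENNReal.ofReal_inv_of_pos hpi, ← ENNReal.ofReal_mul (by positivity)]
        congr 1
        dsimp only [c1, c2]
        field_simp
        ring
lemma one_sub_mul_lower (t : ℝ) (ht : t ∈ Ico (0:ℝ) 1) (z : ℂ) (hz : ‖z‖ < 1) :
    1 - ‖z‖ ≤ ‖1 - (t:ℂ) * z‖ ∧ (1 - t + ‖1 - z‖) / 3 ≤ ‖1 - (t:ℂ) * z‖ := by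
  have n1 : ‖(t:ℂ) * z‖ = t * ‖z‖ := by
    rw [norm_mul, Complex.norm_real, Real.norm_of_nonneg ht.1]
  have h1 := norm_sub_norm_le (1:ℂ) ((t:ℂ) * z)
  rw [norm_one, n1] at h1
  have hz0 := norm_nonneg z
  have ht0 := ht.1
  have ht1 := ht.2
  have h2 : ‖1 - z‖ ≤ ‖1 - (t:ℂ) * z‖ + (1 - t) := by
    have e : 1 - z = (1 - (t:ℂ) * z) - ((1 - t : ℝ) : ℂ) * z := by push_cast; ring
    rw [e]
    refine (norm_sub_le _ _).trans ?_
    gcongr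
    rw [norm_mul, Complex.norm_real, Real.norm_of_nonneg (by linarith)]
    nlinarith
  constructor
  · nlinarith
  · nlinarith

lemma imu_integrable (μ : Measure ℝ) (f : ℂ → ℂ)
    (hint : IntegrableOn (fun t : ℝ => f t) (Ico (0:ℝ) 1) μ) (z : ℂ) (hz : ‖z‖ < 1) (n : ℕ) :
    IntegrableOn (fun t : ℝ => f t / (1 - t * z) ^ n) (Ico (0:ℝ) 1) μ := by
  have hd : 0 < 1 - ‖z‖ := by linarith
  refine Integrable.mono' (hint.norm.div_const ((1 - ‖z‖) ^ n)) ?_ ?_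
  · simp_rw [div_eq_mul_inv]
    exact hint.aestronglyMeasurable.mul
      (by fun_prop : Measurable fun t : ℝ => ((1 - (t:ℂ) * z) ^ n)⁻¹).aestronglyMeasurable
  · filter_upwards [ae_restrict_mem measurableSet_Ico] with t ht
    have := (one_sub_mul_lower t ht z hz).1
    rw [norm_div, norm_pow]
    gcongr

lemma imu_deriv (μ : Measure ℝ) (f : ℂ → ℂ)
    (hint : IntegrableOn (fun t : ℝ => f t) (Ico (0:ℝ) 1) μ) (z : ℂ) (hz : ‖z‖ < 1) :
    HasDerivAt (Imu μ f) (∫ t in Ico (0:ℝ) 1, f t * t / (1 - t * z) ^ 2 ∂μ) z := by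
  set ε := (1 - ‖z‖) / 2 with hε
  have hε0 : 0 < ε := by linarith
  have hb : ∀ w ∈ ball z ε, ‖w‖ < 1 ∧ ε ≤ 1 - ‖w‖ := by
    intro w hw
    rw [mem_ball, dist_eq_norm] at hw
    have := norm_sub_norm_le w z
    constructor <;> linarith
  have key := hasDerivAt_integral_of_dominated_loc_of_deriv_le (μ := μ.restrict (Ico (0:ℝ) 1))
    (F := fun (w : ℂ) (t : ℝ) => f t / (1 - t * w))
    (F' := fun (w : ℂ) (t : ℝ) => f t * t / (1 - t * w) ^ 2) (x₀ := z)
    (bound := fun t : ℝ => ‖f t‖ / ε ^ 2) (ball_mem_nhds z hε0)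
    (by
      filter_upwards [ball_mem_nhds z hε0] with w hw
      have := (imu_integrable μ f hint w (hb w hw).1 1).aestronglyMeasurable
      simpa using this)
    (by simpa [IntegrableOn] using imu_integrable μ f hint z hz 1)
    (by
      simp_rw [div_eq_mul_inv]
      exact (hint.aestronglyMeasurable.mul
        (by fun_prop : Measurable fun t : ℝ => (t:ℂ)).aestronglyMeasurable).mul
        (by fun_prop : Measurable fun t : ℝ => ((1 - (t:ℂ) * z) ^ 2)⁻¹).aestronglyMeasurable)
    (by
      filter_upwards [ae_restrict_mem measurableSet_Ico] with t ht w hw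
      have h1 := (one_sub_mul_lower t ht w (hb w hw).1).1
      have h2 := (hb w hw).2
      rw [norm_div, norm_pow, norm_mul, Complex.norm_real, Real.norm_of_nonneg ht.1]
      have : ‖f t‖ * t ≤ ‖f t‖ := mul_le_of_le_one_right (norm_nonneg _) ht.2.le
      have h3 : ε ≤ ‖1 - (t:ℂ) * w‖ := h2.trans h1
      gcongr)
    (hint.norm.div_const _)
    (by
      filter_upwards [ae_restrict_mem measurableSet_Ico] with t ht w hw
      have h1 := (one_sub_mul_lower t ht w (hb w hw).1).1
      have h2 := (hb w hw).2
      have hne : 1 - (t:ℂ) * w ≠ 0 := by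
        rw [← norm_pos_iff]; linarith
      have h3 : HasDerivAt (fun w : ℂ => 1 - (t:ℂ) * w) (-((t:ℂ) * 1)) w :=
        ((hasDerivAt_id w).const_mul (t:ℂ)).const_sub 1
      have h4 := (hasDerivAt_const w (f t)).div h3 hne
      have e : f t * t / (1 - t * w) ^ 2 =
        (0 * (1 - (t:ℂ) * w) - f t * -((t:ℂ) * 1)) / (1 - (t:ℂ) * w) ^ 2 := by ring
      rw [e]
      exact h4)
  exact key.2

lemma phi_ftc (d x : ℝ) (hd : 0 < d) (hx : 0 < x) (hx1 : x ≤ 1) :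
    ENNReal.ofReal (Real.log (2 / x) / (x + d) ^ 2) = ENNReal.ofReal (Real.log 2 / (1 + d) ^ 2) +
      ∫⁻ y in Ioc x 1, ENNReal.ofReal (1 / (y * (y + d) ^ 2) + 2 * Real.log (2 / y) / (y + d) ^ 3) := by
  have hlog : ∀ y ∈ Icc x 1, 0 < Real.log (2 / y) := by
    intro y hy
    have : 0 < y := hx.trans_le hy.1
    apply Real.log_pos
    rw [lt_div_iff₀ this]; linarith [hy.2]
  have hder : ∀ y ∈ uIcc x 1, HasDerivAt (fun y => -(Real.log (2 / y) / (y + d) ^ 2))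
      (1 / (y * (y + d) ^ 2) + 2 * Real.log (2 / y) / (y + d) ^ 3) y := by
    intro y hy
    rw [uIcc_of_le hx1] at hy
    have hy0 : 0 < y := hx.trans_le hy.1
    have h1 : HasDerivAt (fun y : ℝ => 2 / y) ((0 * y - 2 * 1) / y ^ 2) y :=
      (hasDerivAt_const y (2:ℝ)).div (hasDerivAt_id y) hy0.ne'
    have h2 := h1.log (by positivity)
    have h3 : HasDerivAt (fun y : ℝ => (y + d) ^ 2) (((2:ℕ):ℝ) * (y + d) ^ 1 * 1) y :=
      ((hasDerivAt_id y).add_const d).pow 2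
    have h4 := (h2.div h3 (by positivity)).neg
    have e : (1 / (y * (y + d) ^ 2) + 2 * Real.log (2 / y) / (y + d) ^ 3) =
      -(((0 * y - 2 * 1) / y ^ 2 / (2 / y) * (y + d) ^ 2 - Real.log (2 / y) * (((2:ℕ):ℝ) * (y + d) ^ 1 * 1)) /
        ((y + d) ^ 2) ^ 2) := by
      push_cast
      field_simp
      ring
    rw [e]
    exact h4
  have hcont : ContinuousOn (fun y => 1 / (y * (y + d) ^ 2) + 2 * Real.log (2 / y) / (y + d) ^ 3) (Icc x 1) := by
    have hne : ∀ y ∈ Icc x 1, y ≠ 0 := fun y hy => (hx.trans_le hy.1).ne'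
    have hne2 : ∀ y ∈ Icc x 1, y + d ≠ 0 := fun y hy => by
      have := hx.trans_le hy.1; positivity
    refine ContinuousOn.add ?_ ?_
    · exact ContinuousOn.div (by fun_prop) (by fun_prop) fun y hy =>
        mul_ne_zero (hne y hy) (pow_ne_zero _ (hne2 y hy))
    · refine ContinuousOn.div (ContinuousOn.mul (by fun_prop) (ContinuousOn.log ?_ ?_)) (by fun_prop)
        fun y hy => pow_ne_zero _ (hne2 y hy)
      · exact ContinuousOn.div (by fun_prop) (by fun_prop) hne
      · exact fun y hy => div_ne_zero (by norm_num) (hne y hy)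
  have hftc := intervalIntegral.integral_eq_sub_of_hasDerivAt hder
    (by
      apply ContinuousOn.intervalIntegrable
      rwa [uIcc_of_le hx1])
  have hnn : ∀ y ∈ Icc x 1, 0 ≤ 1 / (y * (y + d) ^ 2) + 2 * Real.log (2 / y) / (y + d) ^ 3 := by
    intro y hy
    have := hx.trans_le hy.1
    have := hlog y hy
    positivity
  rw [← ofReal_integral_eq_lintegral_ofReal, ← intervalIntegral.integral_of_le hx1, hftc,
    ← ENNReal.ofReal_add]
  · congr 1
    rw [div_one]; ring
  · positivity
  · rw [← hftc]
    exact intervalIntegral.integral_nonneg hx1 hnn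
  · exact hcont.integrableOn_Icc.mono_set Ioc_subset_Icc_self
  · filter_upwards [ae_restrict_mem measurableSet_Ioc] with y hy
    exact hnn y (Ioc_subset_Icc_self hy)

lemma lint_inv_sq (d : ℝ) (hd : 0 < d) :
    ∫⁻ y in Ioc (0:ℝ) 1, ENNReal.ofReal (1 / (y + d) ^ 2) ≤ ENNReal.ofReal (1 / d) := by
  have hpos : ∀ y ∈ Icc (0:ℝ) 1, 0 < y + d := fun y hy => by linarith [hy.1]
  have hder : ∀ y ∈ uIcc (0:ℝ) 1, HasDerivAt (fun y => -(1 / (y + d))) (1 / (y + d) ^ 2) y := by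
    intro y hy
    rw [uIcc_of_le zero_le_one] at hy
    have h1 := ((hasDerivAt_const y (1:ℝ)).div ((hasDerivAt_id y).add_const d) (hpos y hy).ne').neg
    have e : 1 / (y + d) ^ 2 = -((0 * (id y + d) - 1 * 1) / (id y + d) ^ 2) := by
      simp only [id]; ring
    rw [e]; exact h1
  have hcont : ContinuousOn (fun y => 1 / (y + d) ^ 2) (Icc (0:ℝ) 1) :=
    ContinuousOn.div (by fun_prop) (by fun_prop) fun y hy => pow_ne_zero _ (hpos y hy).ne'
  have hftc := intervalIntegral.integral_eq_sub_of_hasDerivAt hder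
    (by
      apply ContinuousOn.intervalIntegrable
      rwa [uIcc_of_le zero_le_one])
  rw [← ofReal_integral_eq_lintegral_ofReal, ← intervalIntegral.integral_of_le zero_le_one, hftc]
  · apply ENNReal.ofReal_le_ofReal
    have : 0 < 1 / (1 + d) := by positivity
    rw [zero_add]; linarith
  · exact hcont.integrableOn_Icc.mono_set Ioc_subset_Icc_self
  · exact ae_of_all _ fun y => by simp only [Pi.zero_apply]; positivity

lemma carleson_kernel (μ : Measure ℝ) [IsFiniteMeasure μ] (hμ : IsLogCarleson μ 1 1) :
    ∃ C > 0, ∀ z : ℂ, ‖z‖ < 1 →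
      ∫⁻ t in Ico (0:ℝ) 1, ENNReal.ofReal (Real.log (2 / (1 - t)) / ‖1 - (t:ℂ) * z‖ ^ 2) ∂μ ≤
        ENNReal.ofReal (C / ‖1 - z‖) := by
  obtain ⟨C, hC, h⟩ := hμ
  simp only [Real.rpow_one] at h
  have hl2 : 1 / 2 < Real.log 2 := by linarith [Real.log_two_gt_d9]
  refine ⟨45 * C, by positivity, fun z hz => ?_⟩
  set d := ‖1 - z‖ with hd
  have hd0 : 0 < d := by
    rw [hd, norm_pos_iff, sub_ne_zero]; rintro rfl; simp at hz
  have hlog : ∀ y ∈ Ioc (0:ℝ) 1, Real.log 2 ≤ Real.log (2 / y) := by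
    intro y hy
    have := hy.1
    apply Real.log_le_log (by norm_num)
    rw [le_div_iff₀ this]; linarith [hy.2]
  let ψ : ℝ → ℝ := fun y => 1 / (y * (y + d) ^ 2) + 2 * Real.log (2 / y) / (y + d) ^ 3
  have hψ : Measurable ψ := by
    have := Real.measurable_log
    fun_prop
  have hmass : ∀ y ∈ Ioc (0:ℝ) 1, μ (Ico (1 - y) 1) ≤ ENNReal.ofReal (C * y / Real.log (2 / y)) := by
    intro y hy
    have h1 := h (1 - y) ⟨by linarith [hy.2], by linarith [hy.1]⟩
    have h2 := hlog y hy
    rw [_root_.sub_sub_cancel] at h1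
    rw [← ENNReal.ofReal_toReal (measure_ne_top μ (Ico (1 - y) 1))]
    apply ENNReal.ofReal_le_ofReal
    rwa [le_div_iff₀ (by linarith)]
  calc _ ≤ ∫⁻ t in Ico (0:ℝ) 1, ENNReal.ofReal 9 * (ENNReal.ofReal (Real.log 2 / (1 + d) ^ 2) +
        ∫⁻ y in Ioc (0:ℝ) 1, {p : ℝ × ℝ | 1 - p.1 ≤ p.2}.indicator (fun p => ENNReal.ofReal (ψ p.2)) (t, y)) ∂μ := by
        refine setLIntegral_mono' measurableSet_Ico fun t ht => ?_
        have hx : 0 < 1 - t := by linarith [ht.2]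
        have hx1 : 1 - t ≤ 1 := by linarith [ht.1]
        have h1 := (one_sub_mul_lower t ht z hz).2
        have hL := hlog (1 - t) ⟨hx, hx1⟩
        have hL0 : 0 ≤ Real.log (2 / (1 - t)) := by linarith
        calc _ ≤ ENNReal.ofReal 9 * ENNReal.ofReal (Real.log (2 / (1 - t)) / (1 - t + d) ^ 2) := by
              rw [← ENNReal.ofReal_mul (by norm_num)]
              apply ENNReal.ofReal_le_ofReal
              have e : 9 * (Real.log (2 / (1 - t)) / (1 - t + d) ^ 2) =
                Real.log (2 / (1 - t)) / ((1 - t + d) / 3) ^ 2 := by field_simp; ring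
              rw [e]
              gcongr
          _ ≤ _ := by
              rw [phi_ftc d (1 - t) hd0 hx hx1]
              gcongr ENNReal.ofReal 9 * (_ + ?_)
              calc _ ≤ ∫⁻ y in Ioc (1 - t) 1, {p : ℝ × ℝ | 1 - p.1 ≤ p.2}.indicator
                      (fun p => ENNReal.ofReal (ψ p.2)) (t, y) := by
                    refine setLIntegral_mono' measurableSet_Ioc fun y hy => ?_
                    rw [indicator_of_mem (by simpa using hy.1.le)]
                _ ≤ _ := lintegral_mono_set (Ioc_subset_Ioc_left hx.le)
    _ = ENNReal.ofReal 9 * (ENNReal.ofReal (Real.log 2 / (1 + d) ^ 2) * μ (Ico 0 1) +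
        ∫⁻ t in Ico (0:ℝ) 1, (∫⁻ y in Ioc (0:ℝ) 1, {p : ℝ × ℝ | 1 - p.1 ≤ p.2}.indicator (fun p => ENNReal.ofReal (ψ p.2)) (t, y)) ∂μ) := by
        rw [lintegral_const_mul' _ _ ENNReal.ofReal_ne_top, lintegral_add_left measurable_const,
          setLIntegral_const]
    _ = ENNReal.ofReal 9 * (ENNReal.ofReal (Real.log 2 / (1 + d) ^ 2) * μ (Ico 0 1) +
        ∫⁻ y in Ioc (0:ℝ) 1, ∫⁻ t in Ico (0:ℝ) 1, {p : ℝ × ℝ | 1 - p.1 ≤ p.2}.indicator (fun p => ENNReal.ofReal (ψ p.2)) (t, y) ∂μ) := by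
        congr 2
        refine lintegral_lintegral_swap ?_
        refine Measurable.aemeasurable ?_
        have hm : Measurable ({p : ℝ × ℝ | 1 - p.1 ≤ p.2}.indicator (fun p => ENNReal.ofReal (ψ p.2))) :=
          Measurable.indicator (by fun_prop) (measurableSet_le (by fun_prop) (by fun_prop))
        exact hm
    _ ≤ ENNReal.ofReal 9 * (ENNReal.ofReal (C / d) + ENNReal.ofReal (4 * C) * ENNReal.ofReal (1 / d)) := by
        gcongr
        · have h1 := hmass 1 ⟨by norm_num, le_rfl⟩
          rw [sub_self, div_one, mul_one] at h1
          calc _ ≤ ENNReal.ofReal (Real.log 2 / (1 + d) ^ 2) * ENNReal.ofReal (C / Real.log 2) := by gcongr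
            _ ≤ _ := by
              rw [← ENNReal.ofReal_mul (by positivity)]
              apply ENNReal.ofReal_le_ofReal
              have e : Real.log 2 / (1 + d) ^ 2 * (C / Real.log 2) = C / (1 + d) ^ 2 := by field_simp
              rw [e]
              gcongr
              nlinarith
        · refine le_trans ?_ (mul_le_mul_right (lint_inv_sq d hd0) _)
          rw [← lintegral_const_mul _ (by fun_prop)]
          refine setLIntegral_mono' measurableSet_Ioc fun y hy => ?_
          have hy0 := hy.1
          have hL := hlog y hy
          have hL0 : 0 < Real.log (2 / y) := by linarith
          calc _ = ∫⁻ t in Ico (0:ℝ) 1, (Ici (1 - y)).indicator (fun _ => ENNReal.ofReal (ψ y)) t ∂μ := by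
                refine lintegral_congr fun t => ?_
                simp only [indicator, mem_ofPred_eq, mem_Ici]
                congr 1
                rw [eq_iff_iff]; constructor <;> intro h <;> linarith
            _ = ENNReal.ofReal (ψ y) * μ (Ico (1 - y) 1) := by
                rw [setLIntegral_indicator measurableSet_Ici, setLIntegral_const]
                congr 2
                ext t
                simp only [mem_inter_iff, mem_Ici, mem_Ico]
                constructor
                · rintro ⟨h1, h2⟩; exact ⟨h1, h2.2⟩
                · rintro ⟨h1, h2⟩; exact ⟨h1, by linarith [hy.2], h2⟩
            _ ≤ ENNReal.ofReal (ψ y) * ENNReal.ofReal (C * y / Real.log (2 / y)) := by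
                gcongr
                exact hmass y hy
            _ ≤ _ := by
                rw [← ENNReal.ofReal_mul (by dsimp only [ψ]; positivity), ← ENNReal.ofReal_mul (by positivity)]
                apply ENNReal.ofReal_le_ofReal
                have e : ψ y * (C * y / Real.log (2 / y)) = C * (1 / (y + d) ^ 2) *
                    (1 / Real.log (2 / y) + 2 * (y / (y + d))) := by
                  dsimp only [ψ]; field_simp
                rw [e]
                have h1 : 1 / Real.log (2 / y) ≤ 2 := by
                  rw [div_le_iff₀ hL0]; linarith
                have h2 : y / (y + d) ≤ 1 := by
                  rw [div_le_iff₀ (by positivity)]; linarith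
                calc _ ≤ C * (1 / (y + d) ^ 2) * (2 + 2 * 1) := by gcongr
                  _ = _ := by ring
    _ = _ := by
        rw [← ENNReal.ofReal_mul (by positivity), ← ENNReal.ofReal_add (by positivity) (by positivity),
          ← ENNReal.ofReal_mul (by norm_num)]
        congr 1; ring

lemma mom_bound (μ : Measure ℝ) [IsFiniteMeasure μ] (hμ : IsLogCarleson μ 1 1) :
    ∃ C > 0, ∀ k : ℕ, mom μ k ≤ C / (k + 1) := by
  obtain ⟨C, hC, h⟩ := carleson_kernel μ hμ
  have hl2 : 1 / 2 < Real.log 2 := by linarith [Real.log_two_gt_d9]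
  refine ⟨8 * C, by positivity, fun k => ?_⟩
  have hk : (0:ℝ) < k + 1 := by positivity
  set r : ℝ := k / (k + 1) with hr
  have hr0 : 0 ≤ r := by positivity
  have hr1 : 1 - r = 1 / (k + 1) := by rw [hr]; field_simp; ring
  have hr2 : r < 1 := by
    have : 0 < 1 - r := by rw [hr1]; positivity
    linarith
  have h1 := h (r:ℂ) (by rw [Complex.norm_real, Real.norm_of_nonneg hr0]; exact hr2)
  have e1 : ‖1 - (r:ℂ)‖ = 1 / (k + 1) := by
    rw [← hr1, ← Complex.ofReal_one, ← Complex.ofReal_sub, Complex.norm_real, Real.norm_of_nonneg]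
    linarith
  rw [e1] at h1
  have h2 : ∫⁻ t in Ico (0:ℝ) 1, ENNReal.ofReal (t ^ k) ∂μ ≤ ENNReal.ofReal (8 * C / (k + 1)) := by
    calc _ ≤ ∫⁻ t in Ico (0:ℝ) 1, ENNReal.ofReal (8 / (k + 1) ^ 2) *
          ENNReal.ofReal (Real.log (2 / (1 - t)) / ‖1 - (t:ℂ) * r‖ ^ 2) ∂μ := by
          refine setLIntegral_mono' measurableSet_Ico fun t ht => ?_
          rw [← ENNReal.ofReal_mul (by positivity)]
          apply ENNReal.ofReal_le_ofReal
          have ht0 := ht.1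
          have hx : 0 < 1 - t := by linarith [ht.2]
          have hL : Real.log 2 ≤ Real.log (2 / (1 - t)) := by
            apply Real.log_le_log (by norm_num)
            rw [le_div_iff₀ hx]; linarith
          have htr : 1 - t * r = (1 + k * (1 - t)) / (k + 1) := by
            rw [hr]; field_simp; ring
          have hu : 0 ≤ k * (1 - t) := by positivity
          have e2 : ‖1 - (t:ℂ) * r‖ = (1 + k * (1 - t)) / (k + 1) := by
            rw [← htr, ← Complex.ofReal_mul, ← Complex.ofReal_one, ← Complex.ofReal_sub, Complex.norm_real,
              Real.norm_of_nonneg]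
            rw [htr]; positivity
          rw [e2]
          set u := k * (1 - t) with hu'
          have h3 : t ^ k ≤ Real.exp (-u) := by
            have : t ≤ Real.exp (-(1 - t)) := by
              have := Real.add_one_le_exp (-(1 - t)); linarith
            calc t ^ k ≤ Real.exp (-(1 - t)) ^ k := by gcongr
              _ = _ := by rw [← Real.exp_nat_mul]; congr 1; rw [hu']; ring
          have h4 : (1 + u) ^ 2 ≤ 4 * Real.exp u := by
            have h5 := Real.add_one_le_exp (u / 2)
            have h6 : Real.exp u = Real.exp (u / 2) ^ 2 := by
              rw [← Real.exp_nat_mul]; congr 1; push_cast; ring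
            rw [h6]
            nlinarith
          have h7 : t ^ k * (1 + u) ^ 2 ≤ 4 := by
            calc _ ≤ Real.exp (-u) * (4 * Real.exp u) := by gcongr
              _ = 4 := by rw [mul_left_comm, ← Real.exp_add]; simp
          have e3 : 8 / ((k:ℝ) + 1) ^ 2 * (Real.log (2 / (1 - t)) / ((1 + u) / (k + 1)) ^ 2) =
              8 * Real.log (2 / (1 - t)) / (1 + u) ^ 2 := by field_simp
          rw [e3, le_div_iff₀ (by positivity)]
          linarith
      _ ≤ ENNReal.ofReal (8 / (k + 1) ^ 2) * ENNReal.ofReal (C / (1 / (k + 1))) := by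
          rw [lintegral_const_mul' _ _ ENNReal.ofReal_ne_top]
          gcongr
      _ = _ := by
          rw [← ENNReal.ofReal_mul (by positivity)]
          congr 1; field_simp
  unfold mom
  rw [integral_eq_lintegral_of_nonneg_ae]
  · exact ENNReal.toReal_le_of_le_ofReal (by positivity) h2
  · filter_upwards [ae_restrict_mem measurableSet_Ico] with t ht
    exact pow_nonneg ht.1 k
  · exact (by fun_prop : Measurable fun t : ℝ => t ^ k).aestronglyMeasurable
lemma f_aesm (μ : Measure ℝ) (f : ℂ → ℂ) (hf : DifferentiableOn ℂ f (ball (0:ℂ) 1)) :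
    AEStronglyMeasurable (fun t : ℝ => f t) (μ.restrict (Ico (0:ℝ) 1)) := by
  refine ContinuousOn.aestronglyMeasurable ?_ measurableSet_Ico
  refine hf.continuousOn.comp Complex.continuous_ofReal.continuousOn fun t ht => ?_
  rw [mem_ball_zero_iff, Complex.norm_real, Real.norm_of_nonneg ht.1]
  exact ht.2

lemma pow_int (μ : Measure ℝ) [IsFiniteMeasure μ] (n : ℕ) :
    Integrable (fun t : ℝ => t ^ n) (μ.restrict (Ico (0:ℝ) 1)) := by
  refine Integrable.mono' (integrable_const (1:ℝ)) (by fun_prop) ?_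
  filter_upwards [ae_restrict_mem measurableSet_Ico] with t ht
  rw [norm_pow, Real.norm_of_nonneg ht.1]
  exact pow_le_one₀ ht.1 ht.2.le

lemma mom_nonneg (μ : Measure ℝ) (n : ℕ) : 0 ≤ mom μ n := by
  unfold mom
  exact setIntegral_nonneg measurableSet_Ico fun t ht => pow_nonneg ht.1 n

lemma mom_anti (μ : Measure ℝ) [IsFiniteMeasure μ] (n k : ℕ) : mom μ (n + k) ≤ mom μ k := by
  unfold mom
  refine setIntegral_mono_on (pow_int μ _) (pow_int μ _) measurableSet_Ico fun t ht => ?_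
  exact pow_le_pow_of_le_one ht.1 ht.2.le (by omega)

lemma term_int (μ : Measure ℝ) [IsFiniteMeasure μ] (a : ℂ) (m : ℕ) :
    Integrable (fun t : ℝ => a * (t:ℂ) ^ m) (μ.restrict (Ico (0:ℝ) 1)) ∧
    ∫ t in Ico (0:ℝ) 1, a * (t:ℂ) ^ m ∂μ = (mom μ m : ℂ) * a ∧
    ∫ t in Ico (0:ℝ) 1, ‖a * (t:ℂ) ^ m‖ ∂μ = mom μ m * ‖a‖ := by
  have h1 : Integrable (fun t : ℝ => (t:ℂ) ^ m) (μ.restrict (Ico (0:ℝ) 1)) := by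
    have := (pow_int μ m).ofReal (𝕜 := ℂ)
    simpa using this
  refine ⟨h1.const_mul a, ?_, ?_⟩
  · rw [integral_const_mul, mul_comm]
    congr 1
    unfold mom
    rw [← integral_complex_ofReal]
    simp
  · simp_rw [norm_mul]
    rw [integral_const_mul, mul_comm]
    congr 1
    unfold mom
    refine setIntegral_congr_fun measurableSet_Ico fun t ht => ?_
    simp only [norm_pow, Complex.norm_real]
    rw [Real.norm_of_nonneg ht.1]

lemma hmu_int (μ : Measure ℝ) [IsFiniteMeasure μ] (f : ℂ → ℂ)
    (hf : DifferentiableOn ℂ f (ball (0:ℂ) 1))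
    (hS : Summable fun k : ℕ => mom μ k * ‖tc f k‖) :
    IntegrableOn (fun t : ℝ => f t) (Ico (0:ℝ) 1) μ := by
  refine ⟨f_aesm μ f hf, ?_⟩
  have hle : ∫⁻ t in Ico (0:ℝ) 1, ‖f t‖ₑ ∂μ ≤
      ∑' k, ∫⁻ t in Ico (0:ℝ) 1, ‖tc f k * (t:ℂ) ^ k‖ₑ ∂μ := by
    rw [← lintegral_tsum (fun k => by fun_prop)]
    refine setLIntegral_mono' measurableSet_Ico fun t ht => ?_
    have h := hasSum_tc f hf (t:ℂ) (by
      rw [mem_ball_zero_iff, Complex.norm_real, Real.norm_of_nonneg ht.1]; exact ht.2)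
    rw [← h.tsum_eq]
    exact enorm_tsum_le_tsum_enorm
  refine lt_of_le_of_lt hle ?_
  have e : ∀ k, ∫⁻ t in Ico (0:ℝ) 1, ‖tc f k * (t:ℂ) ^ k‖ₑ ∂μ = ENNReal.ofReal (mom μ k * ‖tc f k‖) := by
    intro k
    have h := term_int μ (tc f k) k
    rw [← h.2.2, ofReal_integral_norm_eq_lintegral_enorm h.1]
  simp_rw [e]
  rw [← ENNReal.ofReal_tsum_of_nonneg (fun k => mul_nonneg (mom_nonneg μ k) (norm_nonneg _)) hS]
  exact ENNReal.ofReal_lt_top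

lemma hmuCoeff_eq (μ : Measure ℝ) [IsFiniteMeasure μ] (f : ℂ → ℂ)
    (hf : DifferentiableOn ℂ f (ball (0:ℂ) 1))
    (hS : Summable fun k : ℕ => mom μ k * ‖tc f k‖) (n : ℕ) :
    (Summable fun k : ℕ => ‖(mom μ (n + k) : ℂ) * tc f k‖) ∧
    hmuCoeff μ f n = ∫ t in Ico (0:ℝ) 1, (t:ℂ) ^ n * f t ∂μ := by
  have hs : Summable fun k : ℕ => mom μ (n + k) * ‖tc f k‖ :=
    Summable.of_nonneg_of_le (fun k => mul_nonneg (mom_nonneg μ _) (norm_nonneg _))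
      (fun k => mul_le_mul_of_nonneg_right (mom_anti μ n k) (norm_nonneg _)) hS
  constructor
  · refine hs.congr fun k => ?_
    rw [norm_mul, Complex.norm_real, Real.norm_of_nonneg (mom_nonneg μ _)]
  · have h := hasSum_integral_of_summable_integral_norm (μ := μ.restrict (Ico (0:ℝ) 1))
      (F := fun k (t : ℝ) => tc f k * (t:ℂ) ^ (n + k)) (fun k => (term_int μ (tc f k) (n + k)).1)
      (hs.congr fun k => (term_int μ (tc f k) (n + k)).2.2.symm)
    simp_rw [(term_int μ _ _).2.1] at h
    unfold hmuCoeff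
    rw [h.tsum_eq]
    refine setIntegral_congr_fun measurableSet_Ico fun t ht => ?_
    have h := hasSum_tc f hf (t:ℂ) (by
      rw [mem_ball_zero_iff, Complex.norm_real, Real.norm_of_nonneg ht.1]; exact ht.2)
    have h2 := (h.mul_left ((t:ℂ) ^ n)).tsum_eq
    rw [← h2]
    refine tsum_congr fun k => ?_
    rw [pow_add]; ring

lemma hmu_eq (μ : Measure ℝ) [IsFiniteMeasure μ] (f : ℂ → ℂ)
    (hf : DifferentiableOn ℂ f (ball (0:ℂ) 1))
    (hS : Summable fun k : ℕ => mom μ k * ‖tc f k‖) :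
    HmuWD μ f ∧ ∀ z ∈ ball (0:ℂ) 1, Hmu μ f z = Imu μ f z := by
  have hint := hmu_int μ f hf hS
  have hI : ∀ n : ℕ, ∀ z : ℂ, Integrable (fun t : ℝ => (t:ℂ) ^ n * f t * z ^ n) (μ.restrict (Ico (0:ℝ) 1)) ∧
      ∫ t in Ico (0:ℝ) 1, ‖(t:ℂ) ^ n * f t * z ^ n‖ ∂μ ≤ (∫ t in Ico (0:ℝ) 1, ‖f t‖ ∂μ) * ‖z‖ ^ n := by
    intro n z
    have h1 : Integrable (fun t : ℝ => (t:ℂ) ^ n * f t * z ^ n) (μ.restrict (Ico (0:ℝ) 1)) := by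
      refine Integrable.mul_const ?_ _
      refine Integrable.mono' hint.norm ?_ ?_
      · exact (by fun_prop : Measurable fun t : ℝ => (t:ℂ) ^ n).aestronglyMeasurable.mul (f_aesm μ f hf)
      · filter_upwards [ae_restrict_mem measurableSet_Ico] with t ht
        rw [norm_mul, norm_pow, Complex.norm_real, Real.norm_of_nonneg ht.1]
        exact mul_le_of_le_one_left (norm_nonneg _) (pow_le_one₀ ht.1 ht.2.le)
    refine ⟨h1, ?_⟩
    rw [← integral_mul_const]
    refine setIntegral_mono_on h1.norm (hint.norm.mul_const _) measurableSet_Ico fun t ht => ?_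
    rw [norm_mul, norm_mul, norm_pow, norm_pow, Complex.norm_real, Real.norm_of_nonneg ht.1]
    gcongr
    exact mul_le_of_le_one_left (norm_nonneg _) (pow_le_one₀ ht.1 ht.2.le)
  have hsum : ∀ z ∈ ball (0:ℂ) 1, Summable fun n : ℕ =>
      ∫ t in Ico (0:ℝ) 1, ‖(t:ℂ) ^ n * f t * z ^ n‖ ∂μ := by
    intro z hz
    rw [mem_ball_zero_iff] at hz
    refine Summable.of_nonneg_of_le (fun n => integral_nonneg fun t => norm_nonneg _)
      (fun n => (hI n z).2) ?_
    exact (summable_geometric_of_lt_one (norm_nonneg z) hz).mul_left _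
  have hc : ∀ n z, hmuCoeff μ f n * z ^ n = ∫ t in Ico (0:ℝ) 1, (t:ℂ) ^ n * f t * z ^ n ∂μ := by
    intro n z
    rw [(hmuCoeff_eq μ f hf hS n).2, integral_mul_const]
  refine ⟨⟨fun n => (hmuCoeff_eq μ f hf hS n).1, fun z hz => ?_⟩, fun z hz => ?_⟩
  · refine Summable.of_nonneg_of_le (fun n => norm_nonneg _) (fun n => ?_) (hsum z hz)
    rw [hc]
    exact norm_integral_le_integral_norm _
  · have h := hasSum_integral_of_summable_integral_norm (μ := μ.restrict (Ico (0:ℝ) 1))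
      (F := fun n (t : ℝ) => (t:ℂ) ^ n * f t * z ^ n) (fun n => (hI n z).1) (hsum z hz)
    unfold Hmu Imu
    simp_rw [hc]
    rw [h.tsum_eq]
    refine setIntegral_congr_fun measurableSet_Ico fun t ht => ?_
    have hlt : ‖(t:ℂ) * z‖ < 1 := by
      rw [mem_ball_zero_iff] at hz
      rw [norm_mul, Complex.norm_real, Real.norm_of_nonneg ht.1]
      have := ht.1; have := ht.2; have := norm_nonneg z
      nlinarith
    have h2 := ((hasSum_geometric_of_norm_lt_one hlt).mul_left (f t)).tsum_eq
    rw [div_eq_mul_inv, ← h2]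
    refine tsum_congr fun k => ?_
    rw [mul_pow]; ring

lemma qs_congr (s : ℝ) (f g : ℂ → ℂ) (h : ∀ z ∈ ball (0:ℂ) 1, f z = g z) :
    (MemQs s f ↔ MemQs s g) ∧ qsNorm s f = qsNorm s g := by
  have hd : ∀ z ∈ ball (0:ℂ) 1, deriv f z = deriv g z := by
    intro z hz
    apply Filter.EventuallyEq.deriv_eq
    filter_upwards [isOpen_ball.mem_nhds hz] with w hw using h w hw
  have hq : ∀ a, qsInt s f a = qsInt s g a := by
    intro a
    unfold qsInt
    congr 1
    refine setLIntegral_congr_fun measurableSet_ball fun z hz => ?_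
    rw [hd z hz]
  constructor
  · unfold MemQs
    simp_rw [hq]
    rw [differentiableOn_congr h]
  · unfold qsNorm
    simp_rw [hq]
    rw [h 0 (by simp)]

def fT (z : ℂ) : ℂ := (Real.log 2 : ℝ) - Complex.log (1 - z)

lemma fT_deriv (z : ℂ) (hz : z ∈ ball (0:ℂ) 1) : HasDerivAt fT (1 / (1 - z)) z := by
  rw [mem_ball_zero_iff] at hz
  have hs : 1 - z ∈ Complex.slitPlane := by
    left
    have := Complex.re_le_norm z
    simp; linarith
  have h1 : HasDerivAt (fun z : ℂ => 1 - z) (-1) z := (hasDerivAt_id z).const_sub 1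
  have h2 := (h1.clog hs).const_sub ((Real.log 2 : ℝ) : ℂ)
  have e : 1 / (1 - z) = -(-1 / (1 - z)) := by ring
  rw [e]
  exact h2

lemma fT_real (t : ℝ) (ht : t ∈ Ico (0:ℝ) 1) : fT t = (Real.log (2 / (1 - t)) : ℝ) := by
  have hx : 0 < 1 - t := by linarith [ht.2]
  unfold fT
  rw [Real.log_div (by norm_num) hx.ne', ← Complex.ofReal_one, ← Complex.ofReal_sub,
    ← Complex.ofReal_log hx.le, ← Complex.ofReal_sub]

lemma fT_mem (s : ℝ) (hs : 0 < s) : MemQs s fT := by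
  refine ⟨fun z hz => (fT_deriv z hz).differentiableAt.differentiableWithinAt, ?_⟩
  obtain ⟨C, hC, h⟩ := qs_of_kernel s hs
  refine lt_of_le_of_lt (h fT 1 zero_le_one fun z hz => ?_) ENNReal.ofReal_lt_top
  rw [(fT_deriv z hz).deriv, norm_div, norm_one]

lemma necessity (μ : Measure ℝ) [IsFiniteMeasure μ] (s : ℝ) (hs : 0 < s)
    (hint : IntegrableOn (fun t : ℝ => fT t) (Ico (0:ℝ) 1) μ) (hm : MemQs s (Imu μ fT)) :
    IsLogCarleson μ 1 1 := by
  have hb := bloch_of_qs s hs _ hm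
  set M := 2 / Real.sqrt (Real.log 2 ^ s) *
    Real.sqrt (⨆ a ∈ ball (0:ℂ) 1, qsInt s (Imu μ fT) a).toReal with hM
  have hM0 : 0 ≤ M := by positivity
  have hmu0 : 0 ≤ (μ univ).toReal := ENNReal.toReal_nonneg
  refine ⟨8 * M + 4 * (μ univ).toReal + 1, by positivity, fun r hr => ?_⟩
  rw [Real.rpow_one, Real.rpow_one]
  have hr0 := hr.1
  have hr1 : 0 < 1 - r := by linarith [hr.2]
  have hlog : ∀ t ∈ Ico (0:ℝ) 1, 0 ≤ Real.log (2 / (1 - t)) := by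
    intro t ht
    apply Real.log_nonneg
    rw [le_div_iff₀ (by linarith [ht.2])]; linarith [ht.1]
  have hL := hlog r hr
  have hmle : (μ (Ico r 1)).toReal ≤ (μ univ).toReal :=
    ENNReal.toReal_mono (measure_ne_top μ _) (measure_mono (subset_univ _))
  have hm0 : 0 ≤ (μ (Ico r 1)).toReal := ENNReal.toReal_nonneg
  by_cases hr2 : r < 1 / 2
  · have h1 : Real.log (2 / (1 - r)) ≤ 2 := by
      have h2 := Real.log_le_sub_one_of_pos (x := 2 / (1 - r) / 2) (by positivity)
      have h3 : 2 / (1 - r) ≤ 4 := by rw [div_le_iff₀ hr1]; linarith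
      rw [Real.log_div (by positivity) (by norm_num)] at h2
      have := Real.log_two_lt_d9
      linarith
    nlinarith [mul_le_mul hmle h1 hL hmu0]
  · push Not at hr2
    have hnr : ‖(r:ℂ)‖ = r := by rw [Complex.norm_real, Real.norm_of_nonneg hr0]
    have hd := (imu_deriv μ fT hint (r:ℂ) (by rw [hnr]; exact hr.2)).deriv
    have h1 := hb (r:ℂ) (by rw [mem_ball_zero_iff, hnr]; exact hr.2)
    rw [hd, hnr] at h1
    have e : ∫ t in Ico (0:ℝ) 1, fT t * t / (1 - t * r) ^ 2 ∂μ =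
        ((∫ t in Ico (0:ℝ) 1, Real.log (2 / (1 - t)) * t / (1 - t * r) ^ 2 ∂μ : ℝ) : ℂ) := by
      rw [← integral_complex_ofReal]
      refine setIntegral_congr_fun measurableSet_Ico fun t ht => ?_
      rw [fT_real t ht]; push_cast; rfl
    have hnn : ∀ t ∈ Ico (0:ℝ) 1, 0 ≤ Real.log (2 / (1 - t)) * t / (1 - t * r) ^ 2 := by
      intro t ht
      have := hlog t ht
      have := ht.1
      positivity
    rw [e, Complex.norm_real, Real.norm_of_nonneg (setIntegral_nonneg measurableSet_Ico hnn)] at h1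
    have hi : IntegrableOn (fun t : ℝ => Real.log (2 / (1 - t)) * t / (1 - t * r) ^ 2) (Ico (0:ℝ) 1) μ := by
      have hi2 := imu_integrable μ fT hint (r:ℂ) (by rw [hnr]; exact hr.2) 2
      refine Integrable.mono' hi2.norm ?_ ?_
      · exact (by have := Real.measurable_log; fun_prop : Measurable fun t : ℝ => Real.log (2 / (1 - t)) * t / (1 - t * r) ^ 2).aestronglyMeasurable
      · filter_upwards [ae_restrict_mem measurableSet_Ico] with t ht
        have hl := hlog t ht
        have e2 : (1 - (t:ℂ) * r) = ((1 - t * r : ℝ) : ℂ) := by push_cast; rfl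
        rw [Real.norm_of_nonneg (hnn t ht), fT_real t ht, norm_div, norm_pow, e2, Complex.norm_real,
          Complex.norm_real, Real.norm_of_nonneg hl, Real.norm_eq_abs, sq_abs]
        gcongr
        exact mul_le_of_le_one_right hl ht.2.le
    have h2 : (μ (Ico r 1)).toReal * (Real.log (2 / (1 - r)) / (8 * (1 - r) ^ 2)) ≤
        ∫ t in Ico (0:ℝ) 1, Real.log (2 / (1 - t)) * t / (1 - t * r) ^ 2 ∂μ := by
      have hsub : Ico r 1 ⊆ Ico (0:ℝ) 1 := Ico_subset_Ico_left hr0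
      calc _ = ∫ t in Ico r 1, Real.log (2 / (1 - r)) / (8 * (1 - r) ^ 2) ∂μ := by
            rw [setIntegral_const, smul_eq_mul]; rfl
        _ ≤ ∫ t in Ico r 1, Real.log (2 / (1 - t)) * t / (1 - t * r) ^ 2 ∂μ := by
            refine setIntegral_mono_on (integrable_const _) (hi.mono_set hsub) measurableSet_Ico fun t ht => ?_
            have ht1 : 0 < 1 - t := by linarith [ht.2]
            have ht0 := ht.1
            have hx : 0 < 1 - t * r := by nlinarith
            have hx2 : 1 - t * r ≤ 2 * (1 - r) := by nlinarith
            have hl : Real.log (2 / (1 - r)) ≤ Real.log (2 / (1 - t)) :=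
              Real.log_le_log (by positivity) (by gcongr)
            calc _ = Real.log (2 / (1 - r)) * (1 / 2) / (2 * (1 - r)) ^ 2 := by field_simp; ring
              _ ≤ _ := by
                have : 1 / 2 ≤ t := by linarith
                have := hL.trans hl
                gcongr
        _ ≤ _ := by
            refine setIntegral_mono_set hi ?_ hsub.eventuallyLE
            filter_upwards [ae_restrict_mem measurableSet_Ico] with t ht using hnn t ht
    have h3 : (1 - r) * ((μ (Ico r 1)).toReal * (Real.log (2 / (1 - r)) / (8 * (1 - r) ^ 2))) ≤ M :=
      (mul_le_mul_of_nonneg_left h2 hr1.le).trans h1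
    have e3 : (1 - r) * ((μ (Ico r 1)).toReal * (Real.log (2 / (1 - r)) / (8 * (1 - r) ^ 2))) =
      (μ (Ico r 1)).toReal * Real.log (2 / (1 - r)) / (8 * (1 - r)) := by field_simp
    rw [e3, div_le_iff₀ (by positivity)] at h3
    nlinarith

lemma sufficiency (μ : Measure ℝ) [IsFiniteMeasure μ] (s₁ s₂ : ℝ) (hs₁ : 0 < s₁) (hs₂ : 0 < s₂)
    (hμ : IsLogCarleson μ 1 1) : ∃ C > 0, ∀ f : ℂ → ℂ, MemQs s₁ f →
      IntegrableOn (fun t : ℝ => f t) (Ico (0:ℝ) 1) μ ∧ MemQs s₂ (Imu μ f) ∧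
      qsNorm s₂ (Imu μ f) ≤ C * qsNorm s₁ f ∧ Summable fun k : ℕ => mom μ k * ‖tc f k‖ := by
  obtain ⟨C₁, hC₁, hker⟩ := carleson_kernel μ hμ
  obtain ⟨C₂, hC₂, hmom⟩ := mom_bound μ hμ
  obtain ⟨C₃, hC₃, hqs⟩ := qs_of_kernel s₂ hs₂
  have hl2 : 1 / 2 < Real.log 2 := by linarith [Real.log_two_gt_d9]
  set c1 := 2 / Real.sqrt (Real.log 2 ^ s₁) with hc1
  have hc10 : 0 ≤ c1 := by positivity
  refine ⟨(2 + c1) * C₁ + Real.sqrt C₃ * ((2 + c1) * C₁), by positivity, fun f hf => ?_⟩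
  have hN0 : 0 ≤ qsNorm s₁ f := by unfold qsNorm; positivity
  have hgr : ∀ z ∈ ball (0:ℂ) 1, ‖f z‖ ≤ ((2 + c1) * qsNorm s₁ f) * Real.log (2 / (1 - ‖z‖)) := by
    intro z hz
    have h := growth f hf.1 _ (bloch_of_qs s₁ hs₁ f hf) z hz
    refine h.trans ?_
    have hz' : ‖z‖ < 1 := by simpa using hz
    have hl : 0 ≤ Real.log (2 / (1 - ‖z‖)) := by
      apply Real.log_nonneg
      rw [le_div_iff₀ (by linarith)]; linarith [norm_nonneg z]
    gcongr
    unfold qsNorm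
    set R := Real.sqrt (⨆ a ∈ ball (0:ℂ) 1, qsInt s₁ f a).toReal
    have hR : 0 ≤ R := Real.sqrt_nonneg _
    have h1 : ‖f 0‖ / Real.log 2 ≤ 2 * ‖f 0‖ := by
      rw [div_le_iff₀ (by linarith)]
      nlinarith [norm_nonneg (f 0)]
    nlinarith [norm_nonneg (f 0), mul_nonneg hc10 (norm_nonneg (f 0))]
  set B := (2 + c1) * qsNorm s₁ f with hB
  have hB0 : 0 ≤ B := by positivity
  have hker2 : ∀ z : ℂ, ‖z‖ < 1 →
      ∫⁻ t in Ico (0:ℝ) 1, ‖f t / (1 - (t:ℂ) * z) ^ 2‖ₑ ∂μ ≤ ENNReal.ofReal (B * C₁ / ‖1 - z‖) := by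
    intro z hz
    calc _ ≤ ∫⁻ t in Ico (0:ℝ) 1, ENNReal.ofReal B *
          ENNReal.ofReal (Real.log (2 / (1 - t)) / ‖1 - (t:ℂ) * z‖ ^ 2) ∂μ := by
          refine setLIntegral_mono' measurableSet_Ico fun t ht => ?_
          rw [← ENNReal.ofReal_mul hB0, ← ofReal_norm]
          apply ENNReal.ofReal_le_ofReal
          have hnt : ‖(t:ℂ)‖ = t := by rw [Complex.norm_real, Real.norm_of_nonneg ht.1]
          have := hgr t (by rw [mem_ball_zero_iff, hnt]; exact ht.2)
          rw [hnt] at this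
          rw [norm_div, norm_pow, ← mul_div_assoc]
          gcongr
      _ ≤ _ := by
          rw [lintegral_const_mul' _ _ ENNReal.ofReal_ne_top, mul_div_assoc, ENNReal.ofReal_mul hB0]
          gcongr
          exact hker z hz
  have hint : IntegrableOn (fun t : ℝ => f t) (Ico (0:ℝ) 1) μ := by
    refine ⟨f_aesm μ f hf.1, ?_⟩
    have := hker2 0 (by simp)
    simp only [mul_zero, sub_zero, one_pow, div_one] at this
    exact lt_of_le_of_lt this ENNReal.ofReal_lt_top
  have hd : ∀ z ∈ ball (0:ℂ) 1, ‖deriv (Imu μ f) z‖ ≤ B * C₁ / ‖1 - z‖ := by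
    intro z hz
    have hz' : ‖z‖ < 1 := by simpa using hz
    rw [(imu_deriv μ f hint z hz').deriv]
    refine (norm_integral_le_lintegral_norm _).trans ?_
    refine ENNReal.toReal_le_of_le_ofReal (by positivity) (le_trans ?_ (hker2 z hz'))
    refine setLIntegral_mono' measurableSet_Ico fun t ht => ?_
    rw [← ofReal_norm]
    apply ENNReal.ofReal_le_ofReal
    rw [norm_div, norm_div, norm_mul, Complex.norm_real, Real.norm_of_nonneg ht.1]
    gcongr
    exact mul_le_of_le_one_right (norm_nonneg _) ht.2.le
  have h0 : ‖Imu μ f 0‖ ≤ B * C₁ := by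
    unfold Imu
    refine (norm_integral_le_lintegral_norm _).trans ?_
    have := hker2 0 (by simp)
    simp only [mul_zero, sub_zero, one_pow, div_one, norm_one] at this
    simp only [mul_zero, sub_zero, div_one, ofReal_norm]
    exact ENNReal.toReal_le_of_le_ofReal (by positivity) this
  have hsup := hqs (Imu μ f) (B * C₁) (by positivity) hd
  refine ⟨hint, ⟨fun z hz => ?_, lt_of_le_of_lt hsup ENNReal.ofReal_lt_top⟩, ?_, ?_⟩
  · exact (imu_deriv μ f hint z (by simpa using hz)).differentiableAt.differentiableWithinAt
  · have h1 := ENNReal.toReal_le_of_le_ofReal (by positivity) hsup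
    have h2 := Real.sqrt_le_sqrt h1
    rw [Real.sqrt_mul hC₃.le, Real.sqrt_sq (by positivity)] at h2
    have e : qsNorm s₂ (Imu μ f) = ‖Imu μ f 0‖ + Real.sqrt (⨆ a ∈ ball (0:ℂ) 1, qsInt s₂ (Imu μ f) a).toReal := rfl
    rw [e]
    refine (add_le_add h0 h2).trans (le_of_eq ?_)
    rw [hB]; ring
  · have hs := (coeff_summable f hf.1 B hgr).mul_left C₂
    refine Summable.of_nonneg_of_le (fun k => mul_nonneg (mom_nonneg μ k) (norm_nonneg _)) (fun k => ?_) hs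
    calc _ ≤ C₂ / (k + 1) * ‖tc f k‖ := mul_le_mul_of_nonneg_right (hmom k) (norm_nonneg _)
      _ = _ := by ring

/-- Theorem 3.5: for any `0 < s₁, s₂ < ∞`, boundedness of `I_μ` (resp. `H_μ`) from `Q_{s₁}`
into `Q_{s₂}` is equivalent to `μ` being a `1`-logarithmic `1`-Carleson measure. -/
theorem imu_hmu_Qs1_Qs2_tfae (μ : Measure ℝ) [IsFiniteMeasure μ]
    (hsupp : μ (Ico (0:ℝ) 1)ᶜ = 0) (s₁ s₂ : ℝ) (hs₁ : 0 < s₁) (hs₂ : 0 < s₂) :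
    [ (∀ f : ℂ → ℂ, MemQs s₁ f → ImuWD μ f ∧ MemQs s₂ (Imu μ f)) ∧
        ∃ C > 0, ∀ f : ℂ → ℂ, MemQs s₁ f → qsNorm s₂ (Imu μ f) ≤ C * qsNorm s₁ f,
      (∀ f : ℂ → ℂ, MemQs s₁ f → HmuWD μ f ∧ MemQs s₂ (Hmu μ f)) ∧
        ∃ C > 0, ∀ f : ℂ → ℂ, MemQs s₁ f → qsNorm s₂ (Hmu μ f) ≤ C * qsNorm s₁ f,
      IsLogCarleson μ 1 1 ].TFAE := by
  tfae_have 1 → 3 := by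
    rintro ⟨h, -⟩
    obtain ⟨h1, h2⟩ := h fT (fT_mem s₁ hs₁)
    refine necessity μ s₂ hs₂ ?_ h2
    have := h1 0 (by simp)
    simpa using this
  tfae_have 2 → 3 := by
    rintro ⟨h, -⟩
    have hT := fT_mem s₁ hs₁
    obtain ⟨h1, h2⟩ := h fT hT
    have hS : Summable fun k : ℕ => mom μ k * ‖tc fT k‖ := by
      refine (h1.1 0).congr fun k => ?_
      rw [norm_mul, Complex.norm_real, Real.norm_of_nonneg (mom_nonneg μ _), zero_add]
    refine necessity μ s₂ hs₂ (hmu_int μ fT hT.1 hS) ?_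
    exact (qs_congr s₂ _ _ (hmu_eq μ fT hT.1 hS).2).1.1 h2
  tfae_have 3 → 1 := by
    intro h
    obtain ⟨C, hC, hb⟩ := sufficiency μ s₁ s₂ hs₁ hs₂ h
    refine ⟨fun f hf => ⟨fun z hz => ?_, (hb f hf).2.1⟩, C, hC, fun f hf => (hb f hf).2.2.1⟩
    simpa using imu_integrable μ f (hb f hf).1 z (by simpa using hz) 1
  tfae_have 3 → 2 := by
    intro h
    obtain ⟨C, hC, hb⟩ := sufficiency μ s₁ s₂ hs₁ hs₂ h
    have hq : ∀ f, MemQs s₁ f → _ := fun f hf => hmu_eq μ f hf.1 (hb f hf).2.2.2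
    refine ⟨fun f hf => ⟨(hq f hf).1, (qs_congr s₂ _ _ (hq f hf).2).1.2 (hb f hf).2.1⟩, C, hC, fun f hf => ?_⟩
    rw [(qs_congr s₂ _ _ (hq f hf).2).2]
    exact (hb f hf).2.2.1
  tfae_finish

end PaperHankel
end
end

section
/- Let μ be a finite positive Borel measure on [0,1). Then μ is a 1-logarithmic 1-Carleson measure if and only if ∫_{[0,1)} t^n log(1/(1-t)) dμ(t) = O(1/n) as n → ∞. -/
open MeasureTheory Set Metric ENNReal

noncomputable section

namespace PaperHankel

theorem aux_pow (n : ℕ) (s d : ℝ) (hs : 0 ≤ s) (hd : 0 ≤ d) (hs1 : s ≤ 1) :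
    n * d * s ^ n ≤ (s + d) ^ n - s ^ n := by
  have h1 : 1 + (n:ℝ) * d ≤ (1 + d) ^ n := one_add_mul_le_pow (by linarith) n
  have h2 : (s * (1 + d)) ^ n ≤ (s + d) ^ n := by
    apply pow_le_pow_left₀ (by positivity)
    nlinarith
  rw [mul_pow] at h2
  have h3 := mul_le_mul_of_nonneg_left h1 (pow_nonneg hs n)
  nlinarith

theorem aux_fwd (μ : Measure ℝ) [IsFiniteMeasure μ] (h : IsLogCarleson μ 1 1) :
    LogMomentBigO μ := by
  obtain ⟨C, hC, h⟩ := h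
  refine ⟨4 * C, by positivity, fun n hn => ?_⟩
  have hn0 : (0:ℝ) < n := by exact_mod_cast hn
  set q : ℕ → ℝ := fun k => (1/2:ℝ) ^ k with hq
  have hqpos : ∀ k, 0 < q k := fun k => by positivity
  have hq1 : ∀ k, q k ≤ 1 := fun k => pow_le_one₀ (by norm_num) (by norm_num)
  have hqs : ∀ k, q (k+1) = q k / 2 := fun k => by simp only [hq, pow_succ]; ring
  set b : ℕ → ℝ := fun k => (1 - q (k+1)) ^ n with hb
  have hb0 : ∀ k, 0 ≤ b k := fun k => pow_nonneg (by linarith [hq1 (k+1)]) n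
  have hb1 : ∀ k, b k ≤ 1 := fun k =>
    pow_le_one₀ (by linarith [hq1 (k+1)]) (by linarith [hqpos (k+1)])
  have hstep : ∀ k, C * q k * b k ≤ 4 * C / n * (b (k+1) - b k) := by
    intro k
    have := aux_pow n (1 - q (k+1)) (q (k+2)) (by linarith [hq1 (k+1)]) (hqpos _).le
      (by linarith [hqpos (k+1)])
    have e : 1 - q (k+1) + q (k+2) = 1 - q (k+1+1) := by
      rw [hqs (k+1)]; ring
    rw [e, hqs (k+1), hqs k] at this
    have h2 : n * (q k / 2 / 2) * b k ≤ b (k+1) - b k := by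
      simpa only [hb, hqs] using this
    have h3 := mul_le_mul_of_nonneg_left h2 (by positivity : 0 ≤ 4 * C / n)
    calc C * q k * b k = 4 * C / n * (n * (q k / 2 / 2) * b k) := by field_simp; ring
      _ ≤ _ := h3
  have hcov : Ico (0:ℝ) 1 ⊆ ⋃ k, Ico (1 - q k) (1 - q (k+1)) := by
    intro t ht
    obtain ⟨k, hk1, hk2⟩ := exists_nat_pow_near_of_lt_one (x := 1 - t) (y := (1/2:ℝ))
      (by linarith [ht.2]) (by linarith [ht.1]) (by norm_num) (by norm_num)
    refine mem_iUnion.2 ⟨k, ?_, ?_⟩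
    · simp only [hq]; linarith
    · simp only [hq]; linarith
  have hpiece : ∀ k, (∫⁻ t in Ico (1 - q k) (1 - q (k+1)),
      ENNReal.ofReal (t ^ n * Real.log (1 / (1 - t))) ∂μ) ≤
      ENNReal.ofReal (4 * C / n * (b (k+1) - b k)) := by
    intro k
    have hl2 : 0 < Real.log 2 := Real.log_pos (by norm_num)
    have hlk : Real.log (2 / q k) = (k+1) * Real.log 2 := by
      have : 2 / q k = 2 ^ (k+1) := by
        simp only [hq, one_div, inv_pow]; field_simp; ring
      rw [this, Real.log_pow]; push_cast; ring
    set l := Real.log (2 / q k) with hl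
    have hlpos : 0 < l := by rw [hlk]; positivity
    have hc := h (1 - q k) ⟨by linarith [hq1 k], by linarith [hqpos k]⟩
    rw [Real.rpow_one, Real.rpow_one, _root_.sub_sub_cancel, ← hl] at hc
    have hμ : (μ (Ico (1 - q k) (1 - q (k+1)))).toReal ≤ (μ (Ico (1 - q k) 1)).toReal := by
      apply ENNReal.toReal_mono (measure_ne_top _ _)
      exact measure_mono (Ico_subset_Ico_right (by linarith [hqpos (k+1)]))
    calc _ ≤ ∫⁻ t in Ico (1 - q k) (1 - q (k+1)), ENNReal.ofReal (b k * l) ∂μ := by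
          apply setLIntegral_mono' measurableSet_Ico
          intro t ht
          apply ENNReal.ofReal_le_ofReal
          have h0 : 0 ≤ t := by linarith [ht.1, hq1 k]
          have ht1 : q (k+1) < 1 - t := by linarith [ht.2]
          have ht0 : 0 < 1 - t := (hqpos _).trans ht1
          have hlog : Real.log (1 / (1 - t)) ≤ l := by
            apply Real.log_le_log (by positivity)
            rw [div_le_div_iff₀ ht0 (hqpos k)]
            linarith [hqs k]
          have hlog0 : 0 ≤ Real.log (1 / (1 - t)) :=
            Real.log_nonneg (by rw [le_div_iff₀ ht0]; linarith)
          exact mul_le_mul (pow_le_pow_left₀ h0 ht.2.le n) hlog hlog0 (hb0 k)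
      _ = ENNReal.ofReal (b k * l * (μ (Ico (1 - q k) (1 - q (k+1)))).toReal) := by
          rw [setLIntegral_const, ENNReal.ofReal_mul (mul_nonneg (hb0 k) hlpos.le),
            ENNReal.ofReal_toReal (measure_ne_top _ _)]
      _ ≤ _ := by
          apply ENNReal.ofReal_le_ofReal
          refine le_trans ?_ (hstep k)
          have h5 := (mul_le_mul_of_nonneg_right hμ hlpos.le).trans hc
          have h6 := mul_le_mul_of_nonneg_left h5 (hb0 k)
          linarith
  have hd : ∀ k, 0 ≤ 4 * C / n * (b (k+1) - b k) := fun k =>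
    le_trans (mul_nonneg (mul_nonneg hC.le (hqpos k).le) (hb0 k)) (hstep k)
  calc _ ≤ ∫⁻ t in ⋃ k, Ico (1 - q k) (1 - q (k+1)),
        ENNReal.ofReal (t ^ n * Real.log (1 / (1 - t))) ∂μ := lintegral_mono_set hcov
    _ ≤ ∑' k, ∫⁻ t in Ico (1 - q k) (1 - q (k+1)),
        ENNReal.ofReal (t ^ n * Real.log (1 / (1 - t))) ∂μ := lintegral_iUnion_le _ _
    _ ≤ ∑' k, ENNReal.ofReal (4 * C / n * (b (k+1) - b k)) := ENNReal.tsum_le_tsum hpiece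
    _ ≤ _ := by
        apply ENNReal.tsum_le_of_sum_range_le
        intro N
        rw [← ENNReal.ofReal_sum_of_nonneg (fun k _ => hd k)]
        apply ENNReal.ofReal_le_ofReal
        rw [← Finset.mul_sum, Finset.sum_range_sub]
        have : b N - b 0 ≤ 1 := by linarith [hb0 0, hb1 N]
        exact mul_le_of_le_one_right (by positivity) this

theorem aux_bwd (μ : Measure ℝ) [IsFiniteMeasure μ] (h : LogMomentBigO μ) :
    IsLogCarleson μ 1 1 := by
  obtain ⟨C, hC, h⟩ := h
  set M := (μ univ).toReal with hM
  have hM0 : 0 ≤ M := ENNReal.toReal_nonneg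
  have hl4 : 0 < Real.log 4 := Real.log_pos (by norm_num)
  refine ⟨16 * C + 2 * M * Real.log 4, by positivity, fun t ht => ?_⟩
  obtain ⟨ht0, ht1⟩ := ht
  have hu : 0 < 1 - t := by linarith
  rw [Real.rpow_one, Real.rpow_one]
  set m := (μ (Ico t 1)).toReal with hm
  have hm0 : 0 ≤ m := ENNReal.toReal_nonneg
  have hmM : m ≤ M := ENNReal.toReal_mono (measure_ne_top _ _) (measure_mono (subset_univ _))
  rcases lt_or_ge t (1/2) with hlt | hge
  · have hlog : Real.log (2 / (1 - t)) ≤ Real.log 4 := by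
      apply Real.log_le_log (by positivity)
      rw [div_le_iff₀ hu]; linarith
    have h1 : m * Real.log (2 / (1 - t)) ≤ M * Real.log 4 :=
      (mul_le_mul_of_nonneg_left hlog hm0).trans (mul_le_mul_of_nonneg_right hmM hl4.le)
    have h2 : 0 ≤ M * Real.log 4 := by positivity
    nlinarith [mul_pos hC hu]
  · set x := 1 / (2 * (1 - t)) with hx
    have hx1 : 1 ≤ x := by rw [hx, le_div_iff₀ (by positivity)]; linarith
    have hxu : x * (1 - t) = 1/2 := by rw [hx]; field_simp
    set n := ⌊x⌋₊ with hn
    have hn1 : 1 ≤ n := (Nat.one_le_floor_iff x).2 hx1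
    have hnx : (n:ℝ) ≤ x := Nat.floor_le (by linarith)
    have hxn : x < n + 1 := Nat.lt_floor_add_one x
    have hn1' : (1:ℝ) ≤ n := by exact_mod_cast hn1
    have hpow : 1/2 ≤ t ^ n := by
      have := one_add_mul_le_pow (a := t - 1) (by linarith) n
      rw [add_sub_cancel] at this
      nlinarith
    set L := Real.log (1 / (1 - t)) with hL
    have hl2 : 0 < Real.log 2 := Real.log_pos (by norm_num)
    have hL2 : Real.log 2 ≤ L := by
      apply Real.log_le_log (by norm_num)
      rw [le_div_iff₀ hu]; linarith
    have hLL : Real.log (2 / (1 - t)) = Real.log 2 + L := by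
      rw [hL, ← Real.log_mul (by norm_num) (by positivity)]; congr 1; ring
    have key : ENNReal.ofReal (1/2 * L * m) ≤ ENNReal.ofReal (C / n) := by
      refine le_trans ?_ (h n hn1)
      calc ENNReal.ofReal (1/2 * L * m)
          = ∫⁻ s in Ico t 1, ENNReal.ofReal (1/2 * L) ∂μ := by
            rw [setLIntegral_const, ENNReal.ofReal_mul (by nlinarith), hm,
              ENNReal.ofReal_toReal (measure_ne_top _ _)]
        _ ≤ ∫⁻ s in Ico t 1, ENNReal.ofReal (s ^ n * Real.log (1 / (1 - s))) ∂μ := by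
            apply setLIntegral_mono' measurableSet_Ico
            intro s hs
            apply ENNReal.ofReal_le_ofReal
            have hs1 : 0 < 1 - s := by linarith [hs.2]
            have h1 : t ^ n ≤ s ^ n := pow_le_pow_left₀ ht0 hs.1 n
            have h2 : L ≤ Real.log (1 / (1 - s)) := by
              apply Real.log_le_log (by positivity)
              apply one_div_le_one_div_of_le hs1
              linarith [hs.1]
            exact mul_le_mul (hpow.trans h1) h2 (by linarith) (by linarith)
        _ ≤ _ := lintegral_mono_set (Ico_subset_Ico_left ht0)
    rw [ENNReal.ofReal_le_ofReal_iff (by positivity)] at key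
    have hCn : C / n ≤ 4 * C * (1 - t) := by
      rw [div_le_iff₀ (by linarith)]
      have : 1 ≤ 4 * (1 - t) * n := by nlinarith
      nlinarith
    rw [hLL]
    have h7 : m * (Real.log 2 + L) ≤ m * (L + L) :=
      mul_le_mul_of_nonneg_left (by linarith) hm0
    have h8 : 0 ≤ 2 * M * Real.log 4 * (1 - t) := by positivity
    nlinarith

/-- `μ` is a `1`-logarithmic `1`-Carleson measure iff
`∫_{[0,1)} tⁿ log(1/(1-t)) dμ(t) = O(1/n)`. -/
theorem logCarleson_iff_moments (μ : Measure ℝ) [IsFiniteMeasure μ]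
    (hsupp : μ (Ico (0:ℝ) 1)ᶜ = 0) :
    IsLogCarleson μ 1 1 ↔ LogMomentBigO μ := by
  exact ⟨aux_fwd μ, aux_bwd μ⟩

end PaperHankel
end
end

section
/- Let μ be a finite positive Borel measure on [0,1) such that ∫_{[0,1)} t^n log(1/(1-t)) dμ(t) = O(1/n) as n → ∞. Then for every function f in the Bloch space B: (a) ∫_{[0,1)} t^n |f(t)| dμ(t) = O(1/n); (b) for every z in the unit disc 𝔻 the integral I_μ(f)(z) = ∫_{[0,1)} f(t)/(1-tz) dμ(t) converges absolutely and I_μ(f)(z) = ∑_{n=0}^∞ (∫_{[0,1)} t^n f(t) dμ(t)) z^n; and (c) I_μ(f) belongs to the mean Lipschitz space Λ²_{1/2}. -/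
open MeasureTheory Set Metric ENNReal

noncomputable section

namespace PaperHankel

theorem bloch_growth (f : ℂ → ℂ) (hd : DifferentiableOn ℂ f (ball (0:ℂ) 1)) (M : ℝ)
    (hM : ∀ z ∈ ball (0:ℂ) 1, (1 - ‖z‖ ^ 2) * ‖deriv f z‖ ≤ M) (t : ℝ) (ht : t ∈ Ico (0:ℝ) 1) :
    ‖f t‖ ≤ ‖f 0‖ + M * Real.log (1 / (1 - t)) := by
  have hmem : ∀ x : ℝ, x ∈ Icc 0 t → (x : ℂ) ∈ ball (0:ℂ) 1 := by
    intro x hx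
    simp only [mem_ball, dist_zero_right, Complex.norm_real, Real.norm_eq_abs, abs_of_nonneg hx.1]
    linarith [hx.2, ht.2]
  have hder : ∀ x : ℝ, x ∈ Icc 0 t → HasDerivAt (fun y : ℝ => f y) (deriv f x) x := by
    intro x hx
    have := (hd.differentiableAt (isOpen_ball.mem_nhds (hmem x hx))).hasDerivAt
    exact this.comp_ofReal
  have hB : ∀ x : ℝ, x ∈ Icc 0 t →
      HasDerivAt (fun y : ℝ => ‖f 0‖ + M * (-Real.log (1 - y))) (M * (1 / (1 - x))) x := by
    intro x hx
    have h1 : (1 - x) ≠ 0 := by linarith [hx.2, ht.2]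
    have h2 : HasDerivAt (fun y : ℝ => 1 - y) (-1) x := by
      simpa using (hasDerivAt_id x).const_sub 1
    have h3 := (((h2.log h1).neg).const_mul M).const_add ‖f 0‖
    have h4 : M * (1 / (1 - x)) = M * -(-1 / (1 - x)) := by ring
    rw [h4]
    exact h3
  have key := image_norm_le_of_norm_deriv_right_le_deriv_boundary' (a := 0) (b := t)
    (f := fun y : ℝ => f y) (f' := fun x : ℝ => deriv f x)
    (B := fun y : ℝ => ‖f 0‖ + M * (-Real.log (1 - y))) (B' := fun x => M * (1 / (1 - x)))
    (fun x hx => (hder x hx).continuousAt.continuousWithinAt)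
    (fun x hx => (hder x (Ico_subset_Icc_self hx)).hasDerivWithinAt)
    (by simp)
    (fun x hx => (hB x hx).continuousAt.continuousWithinAt)
    (fun x hx => (hB x (Ico_subset_Icc_self hx)).hasDerivWithinAt)
    (by
      intro x hx
      have h1 := hM x (hmem x (Ico_subset_Icc_self hx))
      have hx1 : 0 < 1 - x := by linarith [hx.2, ht.2]
      simp only [Complex.norm_real, Real.norm_eq_abs, sq_abs] at h1
      rw [mul_one_div, le_div_iff₀ hx1]
      refine le_trans ?_ h1
      rw [mul_comm]
      apply mul_le_mul_of_nonneg_right _ (norm_nonneg _)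
      nlinarith [hx.1])
    (right_mem_Icc.2 ht.1)
  simpa [Real.log_inv] using key

theorem int_exp_delta (k : ℤ) :
    (∫ θ in (0:ℝ)..(2 * Real.pi), Complex.exp (k * Complex.I * θ)) =
      if k = 0 then (2 * Real.pi : ℂ) else 0 := by
  split_ifs with h
  · subst h; simp
  · have hc : (k : ℂ) * Complex.I ≠ 0 := by
      simp [h]
    rw [integral_exp_mul_complex hc]
    have : (k : ℂ) * Complex.I * ((2 * Real.pi : ℝ) : ℂ) = k * (2 * Real.pi * Complex.I) := by
      push_cast; ring
    rw [this, Complex.exp_int_mul_two_pi_mul_I]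
    simp

theorem parseval_fin (a : ℕ → ℂ) (N : ℕ) :
    (∫ θ in (0:ℝ)..(2 * Real.pi),
      ‖∑ n ∈ Finset.range N, a n * Complex.exp (θ * Complex.I) ^ n‖ ^ 2) =
      2 * Real.pi * ∑ n ∈ Finset.range N, ‖a n‖ ^ 2 := by
  apply Complex.ofReal_injective
  rw [← intervalIntegral.integral_ofReal]
  have h1 : ∀ θ : ℝ,
      (((‖∑ n ∈ Finset.range N, a n * Complex.exp (θ * Complex.I) ^ n‖ ^ 2 : ℝ)) : ℂ) =
      ∑ n ∈ Finset.range N, ∑ m ∈ Finset.range N, (a n * (starRingEnd ℂ) (a m)) *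
        Complex.exp (((n - m : ℤ) : ℂ) * Complex.I * θ) := by
    intro θ
    push_cast
    rw [← Complex.mul_conj', map_sum, Finset.sum_mul_sum]
    refine Finset.sum_congr rfl fun n _ => Finset.sum_congr rfl fun m _ => ?_
    rw [map_mul, map_pow, ← Complex.exp_conj, ← Complex.exp_nat_mul, ← Complex.exp_nat_mul,
      mul_mul_mul_comm, ← Complex.exp_add]
    congr 2
    simp
    ring
  simp_rw [h1]
  rw [intervalIntegral.integral_finsetSum]
  swap
  · intro n _
    apply Continuous.intervalIntegrable
    fun_prop
  push_cast
  rw [Finset.mul_sum]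
  refine Finset.sum_congr rfl fun n hn => ?_
  rw [intervalIntegral.integral_finsetSum]
  swap
  · intro n _
    apply Continuous.intervalIntegrable
    fun_prop
  simp_rw [intervalIntegral.integral_const_mul]
  rw [Finset.sum_eq_single n]
  · have := int_exp_delta ((n : ℤ) - n)
    push_cast at this ⊢
    rw [this]
    simp [Complex.mul_conj']
    ring
  · intro m _ hm
    have := int_exp_delta ((n : ℤ) - m)
    rw [if_neg (by omega)] at this
    push_cast at this ⊢
    rw [this, mul_zero]
  · intro h; exact absurd hn h

theorem parseval_le_s10 (a : ℕ → ℂ) (ha : Summable fun n => ‖a n‖) (K : ℝ)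
    (hK : ∀ N, ∑ n ∈ Finset.range N, ‖a n‖ ^ 2 ≤ K) :
    (∫ θ in (0:ℝ)..(2 * Real.pi), ‖∑' n, a n * Complex.exp (θ * Complex.I) ^ n‖ ^ 2) ≤
      2 * Real.pi * K := by
  have hn : ∀ (θ : ℝ) n, ‖a n * Complex.exp (θ * Complex.I) ^ n‖ = ‖a n‖ := by
    intro θ n
    rw [norm_mul, norm_pow, Complex.norm_exp_ofReal_mul_I]; simp
  have hlim : Filter.Tendsto (fun N => ∫ θ in (0:ℝ)..(2 * Real.pi),
      ‖∑ n ∈ Finset.range N, a n * Complex.exp (θ * Complex.I) ^ n‖ ^ 2) Filter.atTop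
      (nhds (∫ θ in (0:ℝ)..(2 * Real.pi), ‖∑' n, a n * Complex.exp (θ * Complex.I) ^ n‖ ^ 2)) := by
    apply intervalIntegral.tendsto_integral_filter_of_dominated_convergence
      (fun _ => (∑' n, ‖a n‖) ^ 2)
    · refine Filter.Eventually.of_forall fun N => Continuous.aestronglyMeasurable ?_
      fun_prop
    · refine Filter.Eventually.of_forall fun N => Filter.Eventually.of_forall fun θ _ => ?_
      rw [norm_pow, norm_norm]
      refine pow_le_pow_left₀ (norm_nonneg _) ?_ 2
      refine (norm_sum_le _ _).trans ?_
      simp_rw [hn]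
      exact ha.sum_le_tsum _ fun i _ => norm_nonneg _
    · simp
    · refine Filter.Eventually.of_forall fun θ _ => ?_
      have hs : Summable fun n => a n * Complex.exp (θ * Complex.I) ^ n :=
        Summable.of_norm (by simpa only [hn] using ha)
      exact (hs.hasSum.tendsto_sum_nat.norm).pow 2
  refine le_of_tendsto hlim (Filter.Eventually.of_forall fun N => ?_)
  rw [parseval_fin]
  exact mul_le_mul_of_nonneg_left (hK N) (by positivity)

theorem memLambda_of_series (F : ℂ → ℂ) (c : ℕ → ℂ) (C : ℝ) (hC : ∀ n : ℕ, n * ‖c n‖ ≤ C)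
    (hF : ∀ z ∈ ball (0:ℂ) 1, F z = ∑' n, c n * z ^ n) : MemLambda F := by
  have hC0 : 0 ≤ C := by simpa using hC 0
  have hder : ∀ z ∈ ball (0:ℂ) 1, HasDerivAt F (∑' n : ℕ, ((n + 1 : ℕ) * c (n + 1)) * z ^ n) z := by
    intro z hz
    have hz1 : ‖z‖ < 1 := by simpa using hz
    obtain ⟨ρ, hzρ, hρ⟩ := exists_between hz1
    have hρ0 : 0 ≤ ρ := (norm_nonneg z).trans hzρ.le
    have hsum : Summable fun n : ℕ => C * ρ ^ (n - 1) := by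
      rw [← summable_nat_add_iff 1]
      simpa using (summable_geometric_of_lt_one hρ0 hρ).mul_left C
    have hb : ∀ (n : ℕ) (y : ℂ), y ∈ ball (0:ℂ) ρ → ‖c n * (n * y ^ (n - 1))‖ ≤ C * ρ ^ (n - 1) := by
      intro n y hy
      have hy1 : ‖y‖ < ρ := by simpa using hy
      rw [norm_mul, norm_mul, norm_pow, Complex.norm_natCast, ← mul_assoc, mul_comm ‖c n‖]
      exact mul_le_mul (hC n) (pow_le_pow_left₀ (norm_nonneg _) hy1.le _) (by positivity) hC0
    have hzb : z ∈ ball (0:ℂ) ρ := by simpa using hzρ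
    have h := hasDerivAt_tsum_of_isPreconnected (g := fun n z => c n * z ^ n)
      (g' := fun n y => c n * (n * y ^ (n - 1))) (y₀ := 0) (y := z)
      hsum isOpen_ball (convex_ball (0:ℂ) ρ).isPreconnected
      (fun n y _ => (hasDerivAt_pow n y).const_mul (c n)) hb
      (by simpa using lt_of_le_of_lt (norm_nonneg z) hzρ)
      (by
        apply summable_of_ne_finset_zero (s := {0})
        intro n hn
        simp at hn
        simp [hn]) hzb
    have heq : (∑' n : ℕ, c n * (n * z ^ (n - 1))) =
        ∑' n : ℕ, ((n + 1 : ℕ) * c (n + 1)) * z ^ n := by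
      rw [Summable.tsum_eq_zero_add (Summable.of_norm_bounded hsum fun n => hb n z hzb)]
      simp only [Nat.cast_zero, zero_mul, mul_zero, zero_add, Nat.add_sub_cancel]
      refine tsum_congr fun n => by ring
    rw [heq] at h
    refine h.congr_of_eventuallyEq ?_
    filter_upwards [isOpen_ball.mem_nhds hz] with w hw using hF w hw
  refine ⟨fun z hz => (hder z hz).differentiableAt.differentiableWithinAt, C, ?_⟩
  intro r hr
  have hr1 : 0 < 1 - r := by linarith [hr.2]
  have hnorm : ∀ n : ℕ, ‖((n + 1 : ℕ) * c (n + 1)) * (r : ℂ) ^ n‖ ≤ C * r ^ n := by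
    intro n
    rw [norm_mul, norm_mul, norm_pow, Complex.norm_natCast, Complex.norm_real, Real.norm_eq_abs,
      abs_of_nonneg hr.1]
    exact mul_le_mul_of_nonneg_right (hC (n + 1)) (pow_nonneg hr.1 _)
  have hgeo := summable_geometric_of_lt_one hr.1 hr.2
  have hP := parseval_le_s10 (fun n => ((n + 1 : ℕ) * c (n + 1)) * (r : ℂ) ^ n)
    (Summable.of_nonneg_of_le (fun _ => norm_nonneg _) hnorm (hgeo.mul_left C))
    (C ^ 2 / (1 - r)) (by
      intro N
      calc _ ≤ ∑ n ∈ Finset.range N, C ^ 2 * r ^ n := by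
            refine Finset.sum_le_sum fun n _ => ?_
            refine (pow_le_pow_left₀ (norm_nonneg _) (hnorm n) 2).trans ?_
            rw [mul_pow]
            refine mul_le_mul_of_nonneg_left ?_ (sq_nonneg C)
            have h0 : 0 ≤ r ^ n := pow_nonneg hr.1 n
            have h1 : r ^ n ≤ 1 := pow_le_one₀ hr.1 hr.2.le
            nlinarith
        _ ≤ C ^ 2 / (1 - r) := by
            rw [← Finset.mul_sum, div_eq_mul_inv, ← tsum_geometric_of_lt_one hr.1 hr.2]
            refine mul_le_mul_of_nonneg_left ?_ (sq_nonneg C)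
            exact hgeo.sum_le_tsum _ fun i _ => pow_nonneg hr.1 i)
  have hint : (∫ θ in (0:ℝ)..(2 * Real.pi), ‖deriv F (r * Complex.exp (θ * Complex.I))‖ ^ 2) ≤
      2 * Real.pi * (C ^ 2 / (1 - r)) := by
    refine le_trans (le_of_eq ?_) hP
    congr 1
    funext θ
    have hm : (r * Complex.exp (θ * Complex.I) : ℂ) ∈ ball (0:ℂ) 1 := by
      simp [Complex.norm_exp_ofReal_mul_I, abs_of_nonneg hr.1, hr.2]
    rw [(hder _ hm).deriv]
    congr 2
    refine tsum_congr fun n => ?_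
    rw [mul_pow, ← mul_assoc]
  unfold M2
  rw [← Real.sqrt_mul hr1.le]
  refine Real.sqrt_le_iff.2 ⟨hC0, ?_⟩
  have hpi : 0 < 2 * Real.pi := by positivity
  calc _ ≤ (1 - r) * ((2 * Real.pi)⁻¹ * (2 * Real.pi * (C ^ 2 / (1 - r)))) := by gcongr
    _ = C ^ 2 := by field_simp

/-- The implication (iv) ⟹ (i) in Theorem 3.4: if the log-weighted moments of `μ` are
`O(1/n)`, then for every Bloch function `f`: (a) `∫ tⁿ |f(t)| dμ(t) = O(1/n)`,
(b) `I_μ f` is given on `𝔻` by an absolutely convergent integral which expands as a power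
series with coefficients `∫ tⁿ f(t) dμ(t)`, and (c) `I_μ f ∈ Λ²_{1/2}`. -/
theorem imu_bloch_into_lambda (μ : Measure ℝ) [IsFiniteMeasure μ]
    (hsupp : μ (Ico (0:ℝ) 1)ᶜ = 0)
    (hmom : LogMomentBigO μ)
    (f : ℂ → ℂ) (hf : MemBloch f) :
    (∃ C > 0, ∀ n : ℕ, 1 ≤ n →
        (∫⁻ t in Ico (0:ℝ) 1, ENNReal.ofReal (t ^ n * ‖f t‖) ∂μ) ≤ ENNReal.ofReal (C / n)) ∧
    (∀ z ∈ ball (0:ℂ) 1,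
        IntegrableOn (fun t : ℝ => f t / (1 - t * z)) (Ico (0:ℝ) 1) μ ∧
        Imu μ f z = ∑' n : ℕ, (∫ t in Ico (0:ℝ) 1, (t : ℂ) ^ n * f t ∂μ) * z ^ n) ∧
    MemLambda (Imu μ f) := by
  obtain ⟨hd, M, hM⟩ := hf
  obtain ⟨C, hC, hmomC⟩ := hmom
  have hM0 : 0 ≤ M := by
    refine le_trans ?_ (hM 0 (by simp))
    simp
  have hgrow := bloch_growth f hd M hM
  have hlog0 : ∀ t ∈ Ico (0:ℝ) 1, t ≤ Real.log (1 / (1 - t)) := by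
    intro t ht
    have h1 : 0 < 1 - t := by linarith [ht.2]
    have := Real.log_le_sub_one_of_pos h1
    rw [one_div, Real.log_inv]; linarith
  have hmeas : MeasurableSet (Ico (0:ℝ) 1) := measurableSet_Ico
  -- real-valued bounds
  have hLI : ∀ n : ℕ, 1 ≤ n →
      IntegrableOn (fun t : ℝ => t ^ n * Real.log (1 / (1 - t))) (Ico (0:ℝ) 1) μ ∧
      ∫ t in Ico (0:ℝ) 1, t ^ n * Real.log (1 / (1 - t)) ∂μ ≤ C / n := by
    intro n hn
    have hnn : 0 ≤ᵐ[μ.restrict (Ico (0:ℝ) 1)] fun t : ℝ => t ^ n * Real.log (1 / (1 - t)) := by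
      filter_upwards [ae_restrict_mem hmeas] with t ht
      exact mul_nonneg (pow_nonneg ht.1 n) (ht.1.trans (hlog0 t ht))
    have hms : AEStronglyMeasurable (fun t : ℝ => t ^ n * Real.log (1 / (1 - t)))
        (μ.restrict (Ico (0:ℝ) 1)) := by
      apply Measurable.aestronglyMeasurable
      fun_prop
    have hb := hmomC n hn
    refine ⟨⟨hms, ?_⟩, ?_⟩
    · rw [hasFiniteIntegral_iff_ofReal hnn]
      exact hb.trans_lt ENNReal.ofReal_lt_top
    · rw [integral_eq_lintegral_of_nonneg_ae hnn hms]
      exact ENNReal.toReal_le_of_le_ofReal (by positivity) hb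
  have hpowI : ∀ n : ℕ, IntegrableOn (fun t : ℝ => t ^ n) (Ico (0:ℝ) 1) μ := by
    intro n
    refine Integrable.mono' (g := fun _ => (1:ℝ)) (integrable_const _)
      (by apply Measurable.aestronglyMeasurable; fun_prop) ?_
    filter_upwards [ae_restrict_mem hmeas] with t ht
    rw [Real.norm_eq_abs, abs_of_nonneg (pow_nonneg ht.1 n)]
    exact pow_le_one₀ ht.1 ht.2.le
  have hfm : AEStronglyMeasurable (fun t : ℝ => f t) (μ.restrict (Ico (0:ℝ) 1)) := by
    refine ContinuousOn.aestronglyMeasurable ?_ hmeas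
    refine hd.continuousOn.comp Complex.continuous_ofReal.continuousOn ?_
    intro t ht
    simpa [abs_of_nonneg ht.1] using ht.2
  have hfI : IntegrableOn (fun t : ℝ => f t) (Ico (0:ℝ) 1) μ := by
    refine Integrable.mono' (g := fun t : ℝ => ‖f 0‖ + M * (1 + 2 * (t ^ 1 * Real.log (1 / (1 - t)))))
      ?_ hfm ?_
    · exact (integrable_const _).add
        (((integrable_const _).add ((hLI 1 le_rfl).1.const_mul 2)).const_mul M)
    · filter_upwards [ae_restrict_mem hmeas] with t ht
      refine (hgrow t ht).trans ?_
      gcongr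
      have hl := hlog0 t ht
      have hl0 := ht.1.trans hl
      rw [pow_one]
      by_cases h : t < 1 / 2
      · have h1 : Real.log (1 / (1 - t)) ≤ 1 := by
          have hp : 0 < 1 - t := by linarith [ht.2]
          have h2 := Real.log_le_sub_one_of_pos (x := 1 / (1 - t)) (by positivity)
          have h3 : 1 / (1 - t) ≤ 2 := by rw [div_le_iff₀ hp]; linarith
          linarith
        have := mul_nonneg ht.1 hl0
        linarith
      · push Not at h
        nlinarith
  -- moments
  have hmm : ∀ n : ℕ, 1 ≤ n →
      ∫ t in Ico (0:ℝ) 1, t ^ n ∂μ ≤ (μ.real (Ico 0 1) + 2 * C) / n := by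
    intro n hn
    obtain rfl | hn2 := hn.eq_or_lt
    · have : ∫ t in Ico (0:ℝ) 1, t ^ 1 ∂μ ≤ ∫ t in Ico (0:ℝ) 1, (1:ℝ) ∂μ := by
        refine setIntegral_mono_on (hpowI 1) (integrable_const _) hmeas fun t ht => ?_
        simpa using ht.2.le
      simp at this ⊢
      linarith
    · obtain ⟨m, rfl⟩ : ∃ m, n = m + 1 := ⟨n - 1, by omega⟩
      have hm : 1 ≤ m := by omega
      have h1 : ∫ t in Ico (0:ℝ) 1, t ^ (m + 1) ∂μ ≤
          ∫ t in Ico (0:ℝ) 1, t ^ m * Real.log (1 / (1 - t)) ∂μ := by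
        refine setIntegral_mono_on (hpowI _) (hLI m hm).1 hmeas fun t ht => ?_
        rw [pow_succ]
        exact mul_le_mul_of_nonneg_left (hlog0 t ht) (pow_nonneg ht.1 m)
      refine h1.trans ((hLI m hm).2.trans ?_)
      have hm' : (1:ℝ) ≤ m := by exact_mod_cast hm
      have hμ : 0 ≤ μ.real (Ico (0:ℝ) 1) := measureReal_nonneg
      rw [div_le_div_iff₀ (by linarith) (by push_cast; linarith)]
      push_cast
      nlinarith [mul_nonneg hμ (by linarith : (0:ℝ) ≤ m)]
  set A := ‖f 0‖ * (μ.real (Ico (0:ℝ) 1) + 2 * C) + M * C with hA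
  have hA0 : 0 ≤ A := by
    have hμ : 0 ≤ μ.real (Ico (0:ℝ) 1) := measureReal_nonneg
    positivity
  have hgI : ∀ n : ℕ, IntegrableOn (fun t : ℝ => t ^ n * ‖f t‖) (Ico (0:ℝ) 1) μ := by
    intro n
    refine Integrable.mono' hfI.norm
      ((Measurable.aestronglyMeasurable (by fun_prop)).mul hfm.norm) ?_
    filter_upwards [ae_restrict_mem hmeas] with t ht
    rw [Real.norm_eq_abs, abs_of_nonneg (mul_nonneg (pow_nonneg ht.1 n) (norm_nonneg _))]
    exact mul_le_of_le_one_left (norm_nonneg _) (pow_le_one₀ ht.1 ht.2.le)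
  have hgB : ∀ n : ℕ, 1 ≤ n → ∫ t in Ico (0:ℝ) 1, t ^ n * ‖f t‖ ∂μ ≤ A / n := by
    intro n hn
    calc ∫ t in Ico (0:ℝ) 1, t ^ n * ‖f t‖ ∂μ
        ≤ ∫ t in Ico (0:ℝ) 1, (‖f 0‖ * t ^ n + M * (t ^ n * Real.log (1 / (1 - t)))) ∂μ := by
          refine setIntegral_mono_on (hgI n)
            (((hpowI n).const_mul _).add ((hLI n hn).1.const_mul _)) hmeas fun t ht => ?_
          have := mul_le_mul_of_nonneg_left (hgrow t ht) (pow_nonneg ht.1 n)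
          linarith
      _ = ‖f 0‖ * (∫ t in Ico (0:ℝ) 1, t ^ n ∂μ) +
          M * ∫ t in Ico (0:ℝ) 1, t ^ n * Real.log (1 / (1 - t)) ∂μ := by
          rw [integral_add ((hpowI n).const_mul _) ((hLI n hn).1.const_mul _),
            integral_const_mul, integral_const_mul]
      _ ≤ ‖f 0‖ * ((μ.real (Ico 0 1) + 2 * C) / n) + M * (C / n) := by
          gcongr
          · exact hmm n hn
          · exact (hLI n hn).2
      _ = A / n := by rw [hA]; ring
  have hcI : ∀ n : ℕ, IntegrableOn (fun t : ℝ => (t : ℂ) ^ n * f t) (Ico (0:ℝ) 1) μ := by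
    intro n
    refine Integrable.mono' (hgI n)
      ((Measurable.aestronglyMeasurable (by fun_prop)).mul hfm) ?_
    filter_upwards [ae_restrict_mem hmeas] with t ht
    simp [abs_of_nonneg ht.1]
  have hcB : ∀ n : ℕ, ‖∫ t in Ico (0:ℝ) 1, (t : ℂ) ^ n * f t ∂μ‖ ≤
      ∫ t in Ico (0:ℝ) 1, t ^ n * ‖f t‖ ∂μ := by
    intro n
    refine norm_integral_le_of_norm_le (hgI n) ?_
    filter_upwards [ae_restrict_mem hmeas] with t ht
    simp [abs_of_nonneg ht.1]
  have hb : ∀ z ∈ ball (0:ℂ) 1,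
        IntegrableOn (fun t : ℝ => f t / (1 - t * z)) (Ico (0:ℝ) 1) μ ∧
        Imu μ f z = ∑' n : ℕ, (∫ t in Ico (0:ℝ) 1, (t : ℂ) ^ n * f t ∂μ) * z ^ n := by
    intro z hz
    have hz1 : ‖z‖ < 1 := by simpa using hz
    have htz : ∀ t ∈ Ico (0:ℝ) 1, ‖(t : ℂ) * z‖ ≤ ‖z‖ := by
      intro t ht
      rw [norm_mul, Complex.norm_real, Real.norm_eq_abs, abs_of_nonneg ht.1]
      exact mul_le_of_le_one_left (norm_nonneg _) ht.2.le
    constructor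
    · refine Integrable.mono' (hfI.norm.const_mul (1 / (1 - ‖z‖)))
        (hfm.div₀ (Measurable.aestronglyMeasurable (by fun_prop))) ?_
      filter_upwards [ae_restrict_mem hmeas] with t ht
      have h1 : 1 - ‖z‖ ≤ ‖1 - (t : ℂ) * z‖ := by
        have := norm_sub_norm_le (1 : ℂ) (t * z)
        rw [norm_one] at this
        linarith [htz t ht]
      have h2 : 0 < 1 - ‖z‖ := by linarith
      rw [norm_div, div_eq_inv_mul, one_div]
      gcongr
    · have hS := hasSum_integral_of_summable_integral_norm
        (μ := μ.restrict (Ico (0:ℝ) 1)) (F := fun (n : ℕ) (t : ℝ) => ((t : ℂ) ^ n * f t) * z ^ n)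
        (fun n => (hcI n).mul_const _) (by
          refine Summable.of_nonneg_of_le (fun n => integral_nonneg fun t => norm_nonneg _)
            (fun n => ?_) ((summable_geometric_of_lt_one (norm_nonneg z) hz1).mul_left
              (∫ t in Ico (0:ℝ) 1, ‖f t‖ ∂μ))
          simp_rw [norm_mul _ (z ^ n), norm_pow z]
          rw [integral_mul_const]
          gcongr ?_ * _
          refine setIntegral_mono_on (hcI n).norm hfI.norm hmeas fun t ht => ?_
          rw [norm_mul, norm_pow, Complex.norm_real, Real.norm_eq_abs, abs_of_nonneg ht.1]
          exact mul_le_of_le_one_left (norm_nonneg _) (pow_le_one₀ ht.1 ht.2.le))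
      have h2 := hS.tsum_eq
      simp_rw [integral_mul_const] at h2
      rw [h2]
      unfold Imu
      refine setIntegral_congr_fun hmeas fun t ht => ?_
      have h3 := tsum_geometric_of_norm_lt_one ((htz t ht).trans_lt hz1)
      rw [div_eq_mul_inv, ← h3, ← tsum_mul_left]
      refine tsum_congr fun n => ?_
      rw [mul_pow]; ring
  refine ⟨⟨A + 1, by linarith, fun n hn => ?_⟩, hb, ?_⟩
  · rw [← ofReal_integral_eq_lintegral_ofReal (hgI n)]
    · refine ENNReal.ofReal_le_ofReal ((hgB n hn).trans ?_)
      gcongr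
      linarith
    · filter_upwards [ae_restrict_mem hmeas] with t ht
      exact mul_nonneg (pow_nonneg ht.1 n) (norm_nonneg _)
  · refine memLambda_of_series _ _ A (fun n => ?_) (fun z hz => (hb z hz).2)
    obtain rfl | hn := Nat.eq_zero_or_pos n
    · simpa using hA0
    · have hn' : (0:ℝ) < n := by exact_mod_cast hn
      rw [mul_comm, ← le_div_iff₀ hn']
      exact (hcB n).trans (hgB n hn)

end PaperHankel
end
end

section
/- Let μ be a finite positive Borel measure on [0,1), let μ_n denote its moments, and let F(z) = ∑_{k=1}^∞ z^k/k = log(1/(1-z)) on the unit disc 𝔻. Suppose that for every n ≥ 0 the series ∑_{k=1}^∞ μ_{n+k}/k converges, that the power series H_μ(F)(z) = ∑_{n=0}^∞ (∑_{k=1}^∞ μ_{n+k}/k) z^n has radius of convergence at least 1, and that H_μ(F) belongs to the mean Lipschitz space Λ²_{1/2}. Then ∑_{k=1}^∞ μ_{n+k}/k = ∫_{[0,1)} t^n log(1/(1-t)) dμ(t) for every n ≥ 0, and ∫_{[0,1)} t^n log(1/(1-t)) dμ(t) = O(1/n) as n → ∞. -/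
open MeasureTheory Set Metric ENNReal

noncomputable section

namespace PaperHankel

lemma cauchy_sq (g : ℂ → ℂ) (hg : DifferentiableOn ℂ g (ball (0:ℂ) 1)) (r w : ℝ)
    (hw : 0 ≤ w) (hwr : w < r) (hr : r < 1) :
    ‖g w‖ ^ 2 ≤ r / (r - w) * (M2 g r) ^ 2 := by
  have hr0 : 0 < r := by linarith
  have hsub : closedBall (0:ℂ) r ⊆ ball 0 1 := closedBall_subset_ball hr
  have hG : DifferentiableOn ℂ (fun z => g z ^ 2) (closedBall (0:ℂ) r) :=
    (hg.mono hsub).pow 2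
  have hwm : (w:ℂ) ∈ ball (0:ℂ) r := by
    simp [abs_of_nonneg hw, hwr]
  have key := hG.circleIntegral_sub_inv_smul hwm
  have hn : ‖∮ z in C(0, r), (z - (w:ℂ))⁻¹ • g z ^ 2‖ = 2 * Real.pi * ‖g w‖ ^ 2 := by
    rw [key]; simp [abs_of_pos Real.pi_pos]
  have hcont : Continuous fun θ : ℝ => g (circleMap 0 r θ) := by
    have h1 := (hg.mono hsub).continuousOn
    exact h1.comp_continuous (continuous_circleMap 0 r)
      (fun θ => circleMap_mem_closedBall 0 hr0.le θ)
  have hle : ‖∮ z in C(0, r), (z - (w:ℂ))⁻¹ • g z ^ 2‖ ≤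
      ∫ θ in (0:ℝ)..(2 * Real.pi), r / (r - w) * ‖g (circleMap 0 r θ)‖ ^ 2 := by
    unfold circleIntegral
    apply intervalIntegral.norm_integral_le_of_norm_le Real.two_pi_pos.le
    · refine Filter.Eventually.of_forall fun θ _ => ?_
      have h1 : ‖circleMap 0 r θ‖ = r := by simp [abs_of_pos hr0]
      have h2 : r - w ≤ ‖circleMap 0 r θ - (w:ℂ)‖ := by
        have := norm_sub_norm_le (circleMap 0 r θ) (w:ℂ)
        rw [h1, Complex.norm_real, Real.norm_of_nonneg hw] at this
        exact this
      rw [norm_smul, norm_smul, norm_inv, norm_pow, deriv_circleMap, norm_mul, h1,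
        Complex.norm_I, mul_one, ← mul_assoc, div_eq_mul_inv]
      have : 0 < r - w := by linarith
      gcongr
    · apply Continuous.intervalIntegrable
      exact continuous_const.mul (hcont.norm.pow 2)
  have hM : (M2 g r) ^ 2 = (2 * Real.pi)⁻¹ * ∫ θ in (0:ℝ)..(2 * Real.pi),
      ‖g (circleMap 0 r θ)‖ ^ 2 := by
    unfold M2
    rw [Real.sq_sqrt]
    · simp [circleMap]
    · apply mul_nonneg (by positivity)
      apply intervalIntegral.integral_nonneg Real.two_pi_pos.le
      intros; positivity
  rw [hn, intervalIntegral.integral_const_mul] at hle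
  rw [hM]
  have hp := Real.two_pi_pos
  calc ‖g w‖ ^ 2 = (2 * Real.pi)⁻¹ * (2 * Real.pi * ‖g w‖ ^ 2) := by field_simp
    _ ≤ (2 * Real.pi)⁻¹ * (r / (r - w) * ∫ θ in (0:ℝ)..(2 * Real.pi),
          ‖g (circleMap 0 r θ)‖ ^ 2) := by gcongr
    _ = _ := by ring

lemma deriv_lower (a : ℕ → ℝ) (ha0 : ∀ n, 0 ≤ a n) (ha : Antitone a)
    (hs : ∀ z ∈ ball (0:ℂ) 1, Summable fun n : ℕ => ‖(a n : ℂ) * z ^ n‖)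
    (w : ℝ) (hw0 : 0 ≤ w) (hw1 : w < 1) (N : ℕ) :
    a N * w ^ N * (N ^ 2 / 2) ≤ ‖deriv (fun z : ℂ => ∑' n, (a n : ℂ) * z ^ n) w‖ := by
  obtain ⟨ρ, h1, h2⟩ := exists_between hw1
  have hρ : 0 ≤ ρ := by linarith
  have hu := hs (ρ:ℂ) (by simp [abs_of_nonneg hρ, h2])
  have hd := Complex.hasSum_deriv_of_summable_norm (F := fun n (z:ℂ) => (a n : ℂ) * z ^ n)
    (U := ball 0 ρ) (z := (w:ℂ)) hu
    (fun n => by fun_prop) isOpen_ball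
    (fun n z hz => by
      have : ‖z‖ ≤ ρ := (mem_ball_zero_iff.mp hz).le
      rw [norm_mul, norm_mul, norm_pow, norm_pow, Complex.norm_real ρ, Real.norm_of_nonneg hρ]
      gcongr)
    (by simp [abs_of_nonneg hw0, h1])
  have hre := Complex.hasSum_re hd
  have ht : ∀ n : ℕ, (deriv (fun z : ℂ => (a n : ℂ) * z ^ n) (w:ℂ)).re
      = a n * (n * w ^ (n-1)) := by
    intro n
    have : deriv (fun z : ℂ => (a n : ℂ) * z ^ n) (w:ℂ) = ((a n * (n * w ^ (n-1)) : ℝ) : ℂ) := by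
      simp
    rw [this, Complex.ofReal_re]
  simp only [ht] at hre
  refine le_trans ?_ (Complex.re_le_norm _)
  refine le_trans ?_ (sum_le_hasSum (Finset.range (N+1)) (fun n _ => by
    have := ha0 n; positivity) hre)
  have hterm : ∀ n ∈ Finset.range (N+1), a N * w ^ N * n ≤ a n * (n * w ^ (n-1)) := by
    intro n hn
    have hn' : n ≤ N := by simp at hn; omega
    have e1 := ha hn'
    have e2 : w ^ N ≤ w ^ (n-1) := pow_le_pow_of_le_one hw0 hw1.le (by omega)
    have := ha0 n
    calc a N * w ^ N * n ≤ a n * w ^ (n-1) * n := by gcongr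
      _ = _ := by ring
  refine le_trans ?_ (Finset.sum_le_sum hterm)
  rw [← Finset.mul_sum]
  have := ha0 N
  gcongr
  have : ∀ M : ℕ, ((M:ℝ)^2/2) ≤ ∑ i ∈ Finset.range (M+1), (i:ℝ) := by
    intro M
    induction M with
    | zero => simp
    | succ k ih => rw [Finset.sum_range_succ]; push_cast at *; nlinarith
  exact this N

lemma lint_eq (μ : Measure ℝ) [IsFiniteMeasure μ] (n : ℕ)
    (hsum : Summable fun k : ℕ => mom μ (n + (k + 1)) / ((k : ℝ) + 1)) :
    (∫⁻ t in Ico (0:ℝ) 1, ENNReal.ofReal (t ^ n * Real.log (1 / (1 - t))) ∂μ) =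
      ENNReal.ofReal (∑' k : ℕ, mom μ (n + (k + 1)) / ((k : ℝ) + 1)) := by
  have hmn : ∀ m, 0 ≤ mom μ m := fun m =>
    setIntegral_nonneg measurableSet_Ico fun t ht => pow_nonneg ht.1 _
  rw [ENNReal.ofReal_tsum_of_nonneg (fun k => by have := hmn (n+(k+1)); positivity) hsum]
  have h1 : ∀ t ∈ Ico (0:ℝ) 1, ENNReal.ofReal (t ^ n * Real.log (1 / (1 - t))) =
      ∑' k : ℕ, ENNReal.ofReal (t ^ (n + (k+1)) / ((k:ℝ)+1)) := by
    intro t ht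
    have hs := (Real.hasSum_pow_div_log_of_abs_lt_one (x := t)
      (by rw [abs_of_nonneg ht.1]; exact ht.2)).mul_left (t ^ n)
    have hs' : HasSum (fun k : ℕ => t ^ (n + (k+1)) / ((k:ℝ)+1))
        (t ^ n * Real.log (1 / (1 - t))) := by
      rw [one_div, Real.log_inv]
      refine hs.congr_fun ?_
      intro k; rw [pow_add]; ring
    rw [← ENNReal.ofReal_tsum_of_nonneg _ hs'.summable, hs'.tsum_eq]
    intro k; have := ht.1; positivity
  rw [setLIntegral_congr_fun measurableSet_Ico h1, lintegral_tsum (fun k => by fun_prop)]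
  congr 1; funext k
  have hint : Integrable (fun t : ℝ => t ^ (n + (k+1)) / ((k:ℝ)+1)) (μ.restrict (Ico 0 1)) := by
    apply Integrable.div_const
    refine Integrable.of_bound (by fun_prop) 1 ?_
    filter_upwards [ae_restrict_mem measurableSet_Ico] with t ht
    rw [Real.norm_of_nonneg (pow_nonneg ht.1 _)]
    exact pow_le_one₀ ht.1 ht.2.le
  rw [← ofReal_integral_eq_lintegral_ofReal hint, mom, integral_div]
  filter_upwards [ae_restrict_mem measurableSet_Ico] with t ht
  have := ht.1
  simp only [Pi.zero_apply]
  positivity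

/-- The implication (ii) ⟹ (iv) in Theorem 3.4: if `H_μ(F)`, for
`F(z) = ∑_{k≥1} z^k/k = log(1/(1-z))`, is well defined and belongs to `Λ²_{1/2}`, then
`∑_{k≥1} μ_{n+k}/k = ∫_{[0,1)} tⁿ log(1/(1-t)) dμ(t)` and this quantity is `O(1/n)`. -/
theorem hmu_logF_in_lambda (μ : Measure ℝ) [IsFiniteMeasure μ]
    (hsupp : μ (Ico (0:ℝ) 1)ᶜ = 0)
    (hsum : ∀ n : ℕ, Summable fun k : ℕ => mom μ (n + (k + 1)) / ((k : ℝ) + 1))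
    (hrad : ∀ z ∈ ball (0:ℂ) 1, Summable fun n : ℕ =>
      ‖((∑' k : ℕ, mom μ (n + (k + 1)) / ((k : ℝ) + 1) : ℝ) : ℂ) * z ^ n‖)
    (hmem : MemLambda fun z : ℂ => ∑' n : ℕ,
      ((∑' k : ℕ, mom μ (n + (k + 1)) / ((k : ℝ) + 1) : ℝ) : ℂ) * z ^ n) :
    (∀ n : ℕ, (∑' k : ℕ, mom μ (n + (k + 1)) / ((k : ℝ) + 1)) =
        ∫ t in Ico (0:ℝ) 1, t ^ n * Real.log (1 / (1 - t)) ∂μ) ∧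
    LogMomentBigO μ := by
  have hpn : ∀ m, Integrable (fun t : ℝ => t ^ m) (μ.restrict (Ico 0 1)) := fun m => by
    refine Integrable.of_bound (by fun_prop) 1 ?_
    filter_upwards [ae_restrict_mem measurableSet_Ico] with t ht
    rw [Real.norm_of_nonneg (pow_nonneg ht.1 _)]
    exact pow_le_one₀ ht.1 ht.2.le
  have hmn : ∀ m, 0 ≤ mom μ m := fun m =>
    setIntegral_nonneg measurableSet_Ico fun t ht => pow_nonneg ht.1 _
  have hma : Antitone (mom μ) := fun m n h =>
    setIntegral_mono_on (hpn n) (hpn m) measurableSet_Ico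
      fun t ht => pow_le_pow_of_le_one ht.1 ht.2.le h
  set a : ℕ → ℝ := fun n => ∑' k : ℕ, mom μ (n + (k + 1)) / ((k : ℝ) + 1) with ha
  have ha0 : ∀ n, 0 ≤ a n := fun n => tsum_nonneg fun k => by
    have := hmn (n+(k+1)); positivity
  have haa : Antitone a := fun m n h => (hsum n).tsum_le_tsum (fun k => by
    have := hma (show m + (k+1) ≤ n + (k+1) by omega)
    gcongr) (hsum m)
  refine ⟨fun n => ?_, ?_⟩
  · rw [integral_eq_lintegral_of_nonneg_ae, lint_eq μ n (hsum n),
      ENNReal.toReal_ofReal (ha0 n)]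
    · filter_upwards [ae_restrict_mem measurableSet_Ico] with t ht
      have h0 := ht.1
      have h1 := ht.2
      refine mul_nonneg (pow_nonneg h0 _) (Real.log_nonneg ?_)
      rw [le_div_iff₀ (by linarith)]; linarith
    · apply Measurable.aestronglyMeasurable
      fun_prop
  · obtain ⟨hdiff, C, hC⟩ := hmem
    have hC0 : 0 ≤ C := le_trans (mul_nonneg (Real.sqrt_nonneg _) (Real.sqrt_nonneg _))
      (hC 0 (by simp))
    refine ⟨16 * C + 1, by positivity, fun n hn => ?_⟩
    rw [lint_eq μ n (hsum n)]
    apply ENNReal.ofReal_le_ofReal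
    change a n ≤ _
    have hN : (1:ℝ) ≤ n := by exact_mod_cast hn
    have hN0 : (0:ℝ) < n := by linarith
    set w : ℝ := 1 - 1 / (2 * n) with hw
    set r : ℝ := 1 - 1 / (4 * n) with hr
    have e1 : 1 / (2 * (n:ℝ)) ≤ 1 / 2 := by
      rw [div_le_div_iff₀ (by positivity) (by positivity)]; linarith
    have e2 : 1 / (2 * (n:ℝ)) = 2 * (1 / (4 * n)) := by field_simp; norm_num
    have e3 : 0 < 1 / (4 * (n:ℝ)) := by positivity
    have hw0 : 0 ≤ w := by linarith
    have hwr : w < r := by linarith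
    have hr1 : r < 1 := by linarith
    have hlow := deriv_lower a ha0 haa hrad w hw0 (by linarith) n
    have hup := cauchy_sq _ (hdiff.deriv isOpen_ball) r w hw0 hwr hr1
    have hCr := hC r ⟨by linarith, hr1⟩
    set D := ‖deriv (fun z : ℂ => ∑' n, (a n : ℂ) * z ^ n) w‖ with hD
    set M := M2 (deriv (fun z : ℂ => ∑' n, (a n : ℂ) * z ^ n)) r with hM
    have hM0 : 0 ≤ M := Real.sqrt_nonneg _
    have hD0 : 0 ≤ D := norm_nonneg _
    change D ^ 2 ≤ r / (r - w) * M ^ 2 at hup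
    change √(1 - r) * M ≤ C at hCr
    have h1r : 1 - r = 1 / (4 * n) := by rw [hr]; ring
    have hrw : r - w = 1 / (4 * n) := by rw [hr, hw, e2]; ring
    have hMC : M ^ 2 ≤ 4 * n * C ^ 2 := by
      have : (√(1 - r) * M) ^ 2 ≤ C ^ 2 := by gcongr
      rw [mul_pow, Real.sq_sqrt (by linarith), h1r, one_div_mul_eq_div,
        div_le_iff₀ (by positivity)] at this
      linarith
    have hDC : D ≤ 4 * n * C := by
      apply le_of_sq_le_sq _ (by positivity)
      calc D ^ 2 ≤ r / (r - w) * M ^ 2 := hup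
        _ ≤ 4 * n * (4 * n * C ^ 2) := by
          apply mul_le_mul _ hMC (by positivity) (by positivity)
          rw [hrw, div_div_eq_mul_div, div_one]
          nlinarith
        _ = _ := by ring
    have hpw : 1 / 2 ≤ w ^ n := by
      have := one_add_mul_le_pow (a := -(1 / (2 * (n:ℝ)))) (by linarith) n
      have e4 : 1 + (n:ℝ) * -(1 / (2 * (n:ℝ))) = 1 / 2 := by field_simp; norm_num
      rw [e4] at this
      rw [hw, sub_eq_add_neg]; exact this
    have han := ha0 n
    have h5 : a n * (1 / 2) * (n ^ 2 / 2) ≤ 4 * n * C := by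
      refine le_trans ?_ (hlow.trans hDC)
      gcongr
    rw [le_div_iff₀ hN0]
    have h6 : n * (a n * n) ≤ n * (16 * C) := by nlinarith
    have := le_of_mul_le_mul_left h6 hN0
    linarith

end PaperHankel
end
end
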